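/- arXiv:2201.04062 — 2 statements merged into one kernel-verified Lean document; each statement's English description precedes it below -/
import Mathlib

section
/- Let c>0, and let H be a graph such that H and its complement H̄ both have congestion more than c. Then there is no ε>0 such that every graph G with |G|>1 that is both H-free and H̄-free has a pure pair A,B with |A|,|B| ≥ ε·|G|^{1-c}; that is, for every ε>0 there exists a graph G with |G|>1 that is H-free and H̄-free and has no pure pair A,B with |A|,|B| ≥ ε·|G|^{1-c}. -/
noncomputable section

namespace PurePairs

open SimpleGraph

variable {V W : Type*}

/-- A pure pair in `G`: a pair of disjoint vertex sets that are complete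
or anticomplete to each other. -/
def PurePair (G : SimpleGraph V) (A B : Set V) : Prop :=
  Disjoint A B ∧
    ((∀ a ∈ A, ∀ b ∈ B, G.Adj a b) ∨ (∀ a ∈ A, ∀ b ∈ B, ¬ G.Adj a b))

/-- `G` contains `H`: some induced subgraph of `G` is isomorphic to `H`. -/
def Contains (G : SimpleGraph V) (H : SimpleGraph W) : Prop :=
  Nonempty (H ↪g G)

/-- The congestion of a graph `H`: the maximum (here: supremum, together with `0`)
of `1 - (|J|-1)/|E(J)|` over all subgraphs `J` of `H` with at least one edge.
If `H` has no edges this is `0`. -/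
def congestion (H : SimpleGraph V) : ℝ :=
  sSup ({0} ∪ {x : ℝ | ∃ J : H.Subgraph, J.edgeSet.Nonempty ∧
    x = 1 - ((J.verts.ncard : ℝ) - 1) / (J.edgeSet.ncard : ℝ)})

/-- `A` is anticomplete to `B`: no edges between them. -/
def Anticomplete (G : SimpleGraph V) (A B : Set V) : Prop :=
  ∀ a ∈ A, ∀ b ∈ B, ¬ G.Adj a b

/-- `A` covers `B`: every vertex of `B` has a neighbour in `A`. -/
def Covers (G : SimpleGraph V) (A B : Set V) : Prop :=
  ∀ b ∈ B, ∃ a ∈ A, G.Adj a b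

/-- `G` is `ε`-sparse: every vertex has degree less than `ε|G|`. -/
def EpsSparse (G : SimpleGraph V) [Fintype V] (ε : ℝ) : Prop :=
  ∀ v : V, ((G.neighborSet v).ncard : ℝ) < ε * (Fintype.card V : ℝ)

/-- `G` is `(γ,δ)`-coherent: there is no pair of disjoint anticomplete sets `A`, `B`
with `|A| ≥ γ` and `|B| ≥ δ`. -/
def Coherent (G : SimpleGraph V) (γ δ : ℝ) : Prop :=
  ¬ ∃ A B : Set V, Disjoint A B ∧ Anticomplete G A B ∧
      γ ≤ (A.ncard : ℝ) ∧ δ ≤ (B.ncard : ℝ)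

/-- `N(X)`: the set of vertices with a neighbour in `X`. -/
def nbhd (G : SimpleGraph V) (X : Set V) : Set V :=
  {v | ∃ x ∈ X, G.Adj x v}

/-- A blockade: a family of nonempty pairwise disjoint vertex sets indexed by a
finite set of integers. -/
def IsBlockade (I : Finset ℤ) (A : ℤ → Set V) : Prop :=
  (∀ i ∈ I, (A i).Nonempty) ∧
    ∀ i ∈ I, ∀ j ∈ I, i ≠ j → Disjoint (A i) (A j)

/-- The blockade `(A i : i ∈ I)` is `(γ,δ)`-divergent. -/
def Divergent (G : SimpleGraph V) (I : Finset ℤ) (A : ℤ → Set V) (γ δ : ℝ) : Prop :=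
  ∃ i ∈ I, ∃ j ∈ I, i ≠ j ∧ ∃ X ⊆ A i, ∃ Y ⊆ A j,
    γ * ((A i).ncard : ℝ) ≤ (X.ncard : ℝ) ∧ δ * ((A j).ncard : ℝ) ≤ (Y.ncard : ℝ) ∧
    Anticomplete G X Y

/-- The blockade `(A i : i ∈ I)` is `τ`-expanding. -/
def Expanding (G : SimpleGraph V) (I : Finset ℤ) (A : ℤ → Set V) (τ : ℝ) : Prop :=
  ∀ i ∈ I, ∀ j ∈ I, i ≠ j → ∀ X ⊆ A i,
    min (τ * (X.ncard : ℝ) / ((A i).ncard : ℝ)) (1/4)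
      ≤ (((nbhd G X) ∩ A j).ncard : ℝ) / ((A j).ncard : ℝ)

/-- The linkage of the blockade `(A i : i ∈ I)` is at most `lam`. -/
def LinkageLE (G : SimpleGraph V) (I : Finset ℤ) (A : ℤ → Set V) (lam : ℝ) : Prop :=
  ∀ i ∈ I, ∀ j ∈ I, i ≠ j → ∀ v ∈ A i,
    ((G.neighborSet v ∩ A j).ncard : ℝ) ≤ lam * ((A j).ncard : ℝ)

/-- The shrinkage of the blockade `(A i : i ∈ I)` is at most `σ`, i.e. its width is at
least `|G|^{1-σ}`. -/
def ShrinkageLE [Fintype V] (I : Finset ℤ) (A : ℤ → Set V) (σ : ℝ) : Prop :=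
  ∀ i ∈ I, (Fintype.card V : ℝ) ^ (1 - σ) ≤ ((A i).ncard : ℝ)

/-- `(L 0, …, L k)` is a levelling in `G`. -/
def IsLevelling (G : SimpleGraph V) (L : ℕ → Set V) (k : ℕ) : Prop :=
  1 ≤ k ∧ (L 0).ncard = 1 ∧
  (∀ i ≤ k, ∀ j ≤ k, i ≠ j → Disjoint (L i) (L j)) ∧
  (∀ i, 1 ≤ i → i ≤ k → Covers G (L (i-1)) (L i)) ∧
  (∀ i, 2 ≤ i → i ≤ k → ∀ h, h + 2 ≤ i → Anticomplete G (L h) (L i))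

/-- The levelling `(L 0, …, L k)` reaches `C`, i.e. `(L 0, …, L k, C)` is a levelling. -/
def Reaches (G : SimpleGraph V) (L : ℕ → Set V) (k : ℕ) (C : Set V) : Prop :=
  IsLevelling G (fun i => if i = k + 1 then C else L i) (k + 1)

/-- The levelling `(L 0, …, L k)` is `(B i : i ∈ I)`-rainbow. -/
def RainbowLevelling (I : Finset ℤ) (B : ℤ → Set V) (L : ℕ → Set V) (k : ℕ) : Prop :=
  ∃ q : ℕ → ℤ, (∀ i ≤ k, q i ∈ I ∧ L i ⊆ B (q i)) ∧
    ∀ i ≤ k, ∀ j ≤ k, q i = q j → i = j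

/-- The levelling `(L 0, …, L k)` grades the blockade `(C j : j ∈ J)` (in some order). -/
def Grades (G : SimpleGraph V) (L : ℕ → Set V) (k : ℕ) (J : Finset ℤ) (C : ℤ → Set V) :
    Prop :=
  Reaches G L k (⋃ j ∈ J, C j) ∧
  ∃ e : ℕ → ℤ, (∀ g < J.card, e g ∈ J) ∧
    (∀ g < J.card, ∀ h < J.card, e g = e h → g = h) ∧
    ∀ g < J.card, ∃ Y ⊆ L k,
      (∀ h, g ≤ h → h < J.card → Covers G Y (C (e h))) ∧
      (∀ h, h < g → Anticomplete G Y (C (e h)))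

/-- The levelling `(L 0, …, L k)` grades the blockade `(C j : j ∈ J)` forwards. -/
def GradesFwd (G : SimpleGraph V) (L : ℕ → Set V) (k : ℕ) (J : Finset ℤ) (C : ℤ → Set V) :
    Prop :=
  Reaches G L k (⋃ j ∈ J, C j) ∧
  ∀ j ∈ J, ∃ Y ⊆ L k,
    (∀ i ∈ J, j ≤ i → Covers G Y (C i)) ∧
    (∀ i ∈ J, i < j → Anticomplete G Y (C i))

/-- The levelling `(L 0, …, L k)` grades the blockade `(C j : j ∈ J)` backwards. -/
def GradesBwd (G : SimpleGraph V) (L : ℕ → Set V) (k : ℕ) (J : Finset ℤ) (C : ℤ → Set V) :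
    Prop :=
  Reaches G L k (⋃ j ∈ J, C j) ∧
  ∀ j ∈ J, ∃ Y ⊆ L k,
    (∀ i ∈ J, i ≤ j → Covers G Y (C i)) ∧
    (∀ i ∈ J, j < i → Anticomplete G Y (C i))

/-- Two levellings are parallel. -/
def Parallel (G : SimpleGraph V) (L : ℕ → Set V) (k : ℕ) (M : ℕ → Set V) (m : ℕ) : Prop :=
  L 0 = M 0 ∧
  Disjoint (⋃ j ∈ Finset.Icc 1 m, M j) (⋃ i ∈ Finset.Icc 1 k, L i) ∧
  Anticomplete G (⋃ j ∈ Finset.Icc 1 m, M j) (⋃ i ∈ Finset.Icc 1 k, L i)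

/-- `(L, M, C)` is a bi-levelling, where `L` has height `k` and `M` has height `m`:
`C` is a blockade, `L, M` are parallel levellings both reaching the union of the
blocks of `C`, and `L` grades `C` forwards. Its height is `k + m` and its length is
the length of `C`. -/
def IsBiLevelling (G : SimpleGraph V) (L : ℕ → Set V) (k : ℕ) (M : ℕ → Set V) (m : ℕ)
    (J : Finset ℤ) (C : ℤ → Set V) : Prop :=
  IsBlockade J C ∧ IsLevelling G L k ∧ IsLevelling G M m ∧ Parallel G L k M m ∧
    Reaches G M m (⋃ j ∈ J, C j) ∧ GradesFwd G L k J C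

/-- A bi-grading: a bi-levelling in which `M` also grades `C` backwards. -/
def IsBiGrading (G : SimpleGraph V) (L : ℕ → Set V) (k : ℕ) (M : ℕ → Set V) (m : ℕ)
    (J : Finset ℤ) (C : ℤ → Set V) : Prop :=
  IsBiLevelling G L k M m J C ∧ GradesBwd G M m J C

/-- The bi-levelling `(L, M, C)` is `(A i : i ∈ I)`-rainbow: each block of `C`, each
level of `L`, and each level of `M` other than `M 0 = L 0` is included in a block of
`A`, and distinct such sets lie in distinct blocks. -/
def RainbowBiLevelling (I : Finset ℤ) (A : ℤ → Set V)
    (L : ℕ → Set V) (k : ℕ) (M : ℕ → Set V) (m : ℕ)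
    (J : Finset ℤ) (C : ℤ → Set V) : Prop :=
  ∃ (qc : ℤ → ℤ) (ql qm : ℕ → ℤ),
    (∀ j ∈ J, qc j ∈ I ∧ C j ⊆ A (qc j)) ∧
    (∀ i ≤ k, ql i ∈ I ∧ L i ⊆ A (ql i)) ∧
    (∀ i, 1 ≤ i → i ≤ m → qm i ∈ I ∧ M i ⊆ A (qm i)) ∧
    (∀ j ∈ J, ∀ j' ∈ J, qc j = qc j' → j = j') ∧
    (∀ i ≤ k, ∀ i' ≤ k, ql i = ql i' → i = i') ∧
    (∀ i, 1 ≤ i → i ≤ m → ∀ i', 1 ≤ i' → i' ≤ m → qm i = qm i' → i = i') ∧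
    (∀ j ∈ J, ∀ i ≤ k, qc j ≠ ql i) ∧
    (∀ j ∈ J, ∀ i, 1 ≤ i → i ≤ m → qc j ≠ qm i) ∧
    (∀ i ≤ k, ∀ i', 1 ≤ i' → i' ≤ m → ql i ≠ qm i')

/-- Each block of `(C j : j ∈ J)` lies in a block of `(A i : i ∈ I)`; the `A`-size of
`C` is at least `η` when every block of `C` has size at least `η` times the size of the
block of `A` containing it. -/
def SizeGE (I : Finset ℤ) (A : ℤ → Set V) (J : Finset ℤ) (C : ℤ → Set V) (η : ℝ) : Prop :=
  ∀ j ∈ J, ∀ i ∈ I, C j ⊆ A i → η * ((A i).ncard : ℝ) ≤ ((C j).ncard : ℝ)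

/-- A `(B i : i ∈ I)`-rainbow induced path `p 0 - p 1 - ⋯ - p n` in `G`. -/
def RainbowPath (G : SimpleGraph V) (I : Finset ℤ) (B : ℤ → Set V)
    (n : ℕ) (p : ℕ → V) : Prop :=
  (∀ i ≤ n, ∀ j ≤ n, p i = p j → i = j) ∧
  (∀ i < n, G.Adj (p i) (p (i+1))) ∧
  (∀ i j, i + 1 < j → j ≤ n → ¬ G.Adj (p i) (p j)) ∧
  ∃ q : ℕ → ℤ, (∀ i ≤ n, q i ∈ I ∧ p i ∈ B (q i)) ∧
    ∀ i ≤ n, ∀ j ≤ n, q i = q j → i = j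

/-- A `(B i : i ∈ I)`-rainbow copy of `H` in `G`: an induced copy of `H` with each
vertex in a different block. -/
def RainbowCopy (G : SimpleGraph V) (I : Finset ℤ) (B : ℤ → Set V)
    (H : SimpleGraph W) : Prop :=
  ∃ (f : H ↪g G) (q : W → ℤ), Function.Injective q ∧ ∀ w : W, q w ∈ I ∧ f w ∈ B (q w)

/-- `(N,K,σ,lam,c)` forces `H`. -/
def Forces (H : SimpleGraph W) (N K : ℕ) (σ lam c : ℝ) : Prop :=
  ∀ {V : Type} [Fintype V] (G : SimpleGraph V),
    Coherent G ((Fintype.card V : ℝ) ^ (1 - c)) ((Fintype.card V : ℝ) ^ (1 - c)) →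
    N ≤ Fintype.card V →
    ∀ (I : Finset ℤ) (A : ℤ → Set V), IsBlockade I A → I.card = K →
      ShrinkageLE I A σ → LinkageLE G I A lam →
      RainbowCopy G I A H

/-- `p 0 - ⋯ - p n` is a handle of length `n` that can be added to (the graph induced
on) `S` inside the ambient graph `H`: an induced path of `H[S ∪ p]` of length at least
two whose ends lie in `S`, whose internal vertices avoid `S` and have degree two in
`H[S ∪ p]`. -/
def IsHandle (H : SimpleGraph V) (S : Set V) (n : ℕ) (p : ℕ → V) : Prop :=
  2 ≤ n ∧
  (∀ i ≤ n, ∀ j ≤ n, p i = p j → i = j) ∧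
  p 0 ∈ S ∧ p n ∈ S ∧
  (∀ i, 0 < i → i < n → p i ∉ S) ∧
  (∀ i < n, H.Adj (p i) (p (i+1))) ∧
  (∀ i j, i + 1 < j → j ≤ n → ¬ H.Adj (p i) (p j)) ∧
  (∀ i, 0 < i → i < n → ∀ w, (w ∈ S ∨ ∃ j ≤ n, w = p j) → H.Adj (p i) w →
    w = p (i-1) ∨ w = p (i+1))

/-- The vertex sets `S` such that the induced subgraph `H[S]` can be built, starting
from the two-vertex graph with no edges, by repeatedly adding handles of length at
least `β`. -/
inductive BuildableOn (H : SimpleGraph V) (β : ℕ) : Set V → Prop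
  | base (u v : V) (huv : u ≠ v) (hadj : ¬ H.Adj u v) : BuildableOn H β {u, v}
  | handle (S : Set V) (n : ℕ) (p : ℕ → V) (hS : BuildableOn H β S)
      (hh : IsHandle H S n p) (hn : β ≤ n) :
      BuildableOn H β (S ∪ {w | ∃ j ≤ n, w = p j})

/-- `H` is `β`-buildable. -/
def Buildable [Fintype V] (H : SimpleGraph V) (β : ℕ) : Prop :=
  BuildableOn H β Set.univ

/-- The vertex sets `S` such that the induced subgraph `H[S]` can be built, starting
from the null graph, by repeatedly adding a subleaf or a handle of length at least
`β`. -/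
inductive WeaklyBuildableOn (H : SimpleGraph V) (β : ℕ) : Set V → Prop
  | empty : WeaklyBuildableOn H β ∅
  | subleaf (S : Set V) (v : V) (hv : v ∉ S) (hdeg : (S ∩ H.neighborSet v).ncard ≤ 1)
      (hS : WeaklyBuildableOn H β S) : WeaklyBuildableOn H β (insert v S)
  | handle (S : Set V) (n : ℕ) (p : ℕ → V) (hS : WeaklyBuildableOn H β S)
      (hh : IsHandle H S n p) (hn : β ≤ n) :
      WeaklyBuildableOn H β (S ∪ {w | ∃ j ≤ n, w = p j})

/-- `H` is weakly `β`-buildable. -/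
def WeaklyBuildable [Fintype V] (H : SimpleGraph V) (β : ℕ) : Prop :=
  WeaklyBuildableOn H β Set.univ

/-!
Take the binomial random graph on `2n` vertices with edge probability `p = n ^ (d - 1)`, where `d`
is slightly larger than `c`. Each of the graphs `H` has a subgraph `J` with
`|J| - 1 < (1 - d) |E(J)|`, so the expected number of copies of `J` is at most
`(2n) ^ |J| * p ^ |E(J)| = o(n)`. A pure pair with both sides of size at least
`k = ⌈ε n ^ (1 - c)⌉` yields a `K_{k,k}` in the graph or in its complement; since
`p k ≥ ε n ^ (d - c)`, the probability `(1 - p) ^ (k ^ 2) ≤ exp (-p k) ^ k` of a given `K_{k,k}` in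
the complement (and the smaller probability `p ^ (k ^ 2)` in the graph) beats the
`(2n) ^ (2k)` choices of its vertices. Some outcome therefore has fewer than `n` copies of the
graphs `J` and no such pure pair, and deleting one vertex of each copy leaves at least `n` vertices.
-/

theorem ncard_edgeSet_coe {H : SimpleGraph V} (J : H.Subgraph) :
    J.coe.edgeSet.ncard = J.edgeSet.ncard := by
  rw [← J.image_coe_edgeSet_coe,
    Set.ncard_image_of_injective _ (Sym2.map.injective Subtype.val_injective)]

theorem verts_nonempty_of_edgeSet_nonempty {H : SimpleGraph V} {J : H.Subgraph}
    (hJ : J.edgeSet.Nonempty) : J.verts.Nonempty :=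
  let ⟨e, he⟩ := hJ
  ⟨_, J.mem_verts_of_mem_edge he e.out_fst_mem⟩

theorem congestion_le_one [Finite V] (H : SimpleGraph V) : congestion H ≤ 1 := by
  refine csSup_le ⟨0, .inl rfl⟩ ?_
  rintro _ (rfl | ⟨J, hJ, rfl⟩)
  · exact zero_le_one
  · have hverts : (1 : ℝ) ≤ J.verts.ncard := Nat.one_le_cast.2 <|
      (Set.ncard_pos).2 (verts_nonempty_of_edgeSet_nonempty hJ)
    exact sub_le_self _ (div_nonneg (sub_nonneg.2 hverts) (Nat.cast_nonneg _))

theorem exists_subgraph_of_lt_congestion [Finite V] {H : SimpleGraph V} {c : ℝ} (hc : 0 ≤ c)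
    (h : c < congestion H) : ∃ J : H.Subgraph, J.verts.Nonempty ∧
      (J.verts.ncard : ℝ) - 1 < (1 - c) * J.edgeSet.ncard := by
  obtain ⟨_, rfl | ⟨J, hJ, rfl⟩, hcJ⟩ := exists_lt_of_lt_csSup ⟨0, .inl rfl⟩ h
  · exact absurd hcJ hc.not_gt
  · have hedges : (0 : ℝ) < J.edgeSet.ncard := Nat.cast_pos.2 <| (Set.ncard_pos).2 hJ
    exact ⟨J, verts_nonempty_of_edgeSet_nonempty hJ, (div_lt_iff₀ hedges).1 (by linarith)⟩

section

variable {ι U : Type*}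

instance [Finite U] [Finite V] (K : SimpleGraph U) (G : SimpleGraph V) : Finite (Copy K G) :=
  .of_injective _ DFunLike.coe_injective

theorem ncard_edgeSet_completeBipartiteGraph (α β : Type*) :
    (completeBipartiteGraph α β).edgeSet.ncard = Nat.card α * Nat.card β := by
  simp [Set.ncard, encard_edgeSet_completeBipartiteGraph, ENat.card, Nat.card]

theorem completeBipartiteGraph_isContained_of_forall_adj [Finite V] {G : SimpleGraph V}
    {A B : Set V} {k l : ℕ} (hA : k ≤ A.ncard) (hB : l ≤ B.ncard)
    (h : ∀ a ∈ A, ∀ b ∈ B, G.Adj a b) :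
    completeBipartiteGraph (Fin k) (Fin l) ⊑ G := by
  obtain ⟨S, hSA, hS⟩ := Set.exists_subset_card_eq hA
  obtain ⟨T, hTB, hT⟩ := Set.exists_subset_card_eq hB
  refine completeBipartiteGraph_isContained_iff.2 ⟨S.toFinite.toFinset, T.toFinite.toFinset, ?_⟩
  simp only [← Set.ncard_eq_toFinset_card, hS, hT, Fintype.card_fin, Set.Finite.coe_toFinset,
    true_and]
  exact fun a ha b hb ↦ h a (hSA ha) b (hTB hb)

theorem PurePair.isContained_or_isContained_compl [Finite V] {G : SimpleGraph V} {A B : Set V}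
    {k l : ℕ} (h : PurePair G A B) (hA : k ≤ A.ncard) (hB : l ≤ B.ncard) :
    completeBipartiteGraph (Fin k) (Fin l) ⊑ G ∨ completeBipartiteGraph (Fin k) (Fin l) ⊑ Gᶜ :=
  h.2.imp (completeBipartiteGraph_isContained_of_forall_adj hA hB) fun hanti ↦
    completeBipartiteGraph_isContained_of_forall_adj hA hB fun a ha b hb ↦
      (compl_adj ..).2 ⟨h.1.ne_of_mem ha hb, hanti a ha b hb⟩

theorem exists_embedding_free_comap [Fintype ι] {U : ι → Type*} [∀ i, Finite (U i)]
    [∀ i, Nonempty (U i)] [Finite V] (K : ∀ i, SimpleGraph (U i)) (G : SimpleGraph V) {n : ℕ}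
    (h : n + ∑ i, Nat.card (Copy (K i) G) ≤ Nat.card V) :
    ∃ f : Fin n ↪ V, ∀ i, (K i).Free (G.comap f) := by
  have u (i) : U i := Classical.arbitrary (U i)
  let D : Set V := Set.range fun φ : Σ i, Copy (K i) G ↦ φ.2 (u φ.1)
  have hD : Nat.card D ≤ ∑ i, Nat.card (Copy (K i) G) :=
    (Finite.card_range_le _).trans_eq Nat.card_sigma
  have hn : n ≤ Nat.card ↑Dᶜ := by
    rw [Nat.card_coe_set_eq, Set.ncard_compl, ← Nat.card_coe_set_eq]
    omega
  refine ⟨(Fin.castLEEmb hn).trans ((Finite.equivFin ↑Dᶜ).symm.toEmbedding.trans (.subtype _)),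
    fun i ⟨φ⟩ ↦ ?_⟩
  exact ((Finite.equivFin ↑Dᶜ).symm (Fin.castLE hn (φ (u i)))).2
    ⟨⟨i, (Embedding.comap _ G).toCopy.comp φ⟩, rfl⟩

end

section

open MeasureTheory ProbabilityTheory unitInterval
open scoped Finset

variable {ι U : Type*} (p : I)

theorem setBernoulli_setOf_superset {u : Set ι} {s : Finset ι} (hs : ↑s ⊆ u) :
    setBer(u, p) {t | ↑s ⊆ t} = toNNReal p ^ #s := by
  classical
  have hpi : (fun q : ι → Prop ↦ {i | q i}) ⁻¹' {t | ↑s ⊆ t} =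
      (s : Set ι).pi fun _ ↦ {True} := by
    ext q
    simp [Set.subset_def]
  rw [setBernoulli_apply', hpi, Measure.infinitePi_pi _ fun _ _ ↦ .of_discrete]
  exact Finset.prod_eq_pow_card fun i hi ↦ by simp [hs hi]

instance [Finite V] : DiscreteMeasurableSpace (SimpleGraph V) where
  forall_measurableSet _ := measurableEmbedding_edgeSet.measurableSet_image.1 .of_discrete

theorem binomialRandom_real_setOf_le [Finite V] (F : SimpleGraph V) :
    G(V, p).real {G | F ≤ G} = (p : ℝ) ^ F.edgeSet.ncard := by
  have hpre : fromEdgeSet ⁻¹' {G | F ≤ G} =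
      {t | (F.edgeSet.toFinite.toFinset : Set (Sym2 V)) ⊆ t} := by
    ext t
    simp
  rw [binomialRandom_eq_map, map_measureReal_apply measurable_fromEdgeSet .of_discrete, hpre,
    measureReal_def, setBernoulli_setOf_superset p (by simp)]
  simp [Set.ncard_eq_toFinset_card F.edgeSet]

theorem ncard_edgeSet_compl [Finite V] (G : SimpleGraph V) :
    Gᶜ.edgeSet.ncard = (Nat.card V).choose 2 - G.edgeSet.ncard := by
  have h : Gᶜ.edgeSet = Sym2.diagSetᶜ \ G.edgeSet := by
    ext e
    induction e
    simp
  rw [h, Set.ncard_sdiff G.edgeSet_subset_compl_diagSet, Sym2.ncard_diagSet_compl]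

theorem map_compl_binomialRandom [Finite V] : G(V, p).map compl = G(V, σ p) := by
  refine Measure.ext_of_singleton fun G ↦ ?_
  have hpre : compl ⁻¹' {G} = {Gᶜ} := Set.ext fun F ↦ compl_eq_comm.trans eq_comm
  have hle : G.edgeSet.ncard ≤ (Nat.card V).choose 2 :=
    Sym2.ncard_diagSet_compl (α := V) ▸ Set.ncard_le_ncard G.edgeSet_subset_compl_diagSet
  rw [Measure.map_apply .of_discrete .of_discrete, hpre, binomialRandom_singleton,
    binomialRandom_singleton, ncard_edgeSet_compl, Nat.sub_sub_self hle, symm_symm, mul_comm]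

theorem card_copy_eq_ncard (K : SimpleGraph U) (G : SimpleGraph V) :
    Nat.card (Copy K G) = {f : U ↪ V | K.map f ≤ G}.ncard := by
  rw [← Nat.card_coe_set_eq]
  exact Nat.card_congr
    { toFun φ := ⟨φ.toEmbedding, (map_le_iff_le_comap ..).2 fun _ _ ↦ φ.toHom.map_adj⟩
      invFun f := ⟨⟨f, fun h ↦ (map_le_iff_le_comap ..).1 f.2 h⟩, f.1.injective⟩ }

theorem integral_card_copy_le [Finite U] [Finite V] (K : SimpleGraph U) :
    ∫ G, (Nat.card (Copy K G) : ℝ) ∂G(V, p) ≤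
      (Nat.card V : ℝ) ^ Nat.card U * (p : ℝ) ^ K.edgeSet.ncard := by
  classical
  have := Fintype.ofFinite (U ↪ V)
  have hcount (G : SimpleGraph V) :
      (Nat.card (Copy K G) : ℝ) = ∑ f : U ↪ V, {G | K.map f ≤ G}.indicator 1 G := by
    simp [card_copy_eq_ncard, Set.ncard_eq_toFinset_card', Set.indicator_apply]
  have hcard : Nat.card (U ↪ V) ≤ Nat.card V ^ Nat.card U :=
    (Nat.card_le_card_of_injective _ DFunLike.coe_injective).trans_eq Nat.card_fun
  calc ∫ G, (Nat.card (Copy K G) : ℝ) ∂G(V, p)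
      = ∑ f : U ↪ V, G(V, p).real {G | K.map f ≤ G} := by
        simp_rw [hcount]
        rw [integral_finsetSum _ fun _ _ ↦ .of_finite]
        simp [integral_indicator_one, MeasurableSet.of_discrete]
    _ = Nat.card (U ↪ V) * (p : ℝ) ^ K.edgeSet.ncard := by
        simp [binomialRandom_real_setOf_le, SimpleGraph.edgeSet_map, Set.ncard_map,
          -Function.Embedding.sym2Map_apply]
    _ ≤ (Nat.card V : ℝ) ^ Nat.card U * (p : ℝ) ^ K.edgeSet.ncard :=
        mul_le_mul_of_nonneg_right (mod_cast hcard) (pow_nonneg p.2.1 _)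

theorem binomialRandom_real_ge_sum_card_copy_le [Finite V] [Fintype ι]
    {U : ι → Type*} [∀ i, Finite (U i)] (K : ∀ i, SimpleGraph (U i)) {t : ℝ} (ht : 0 < t) :
    G(V, p).real {G | t ≤ ∑ i, (Nat.card (Copy (K i) G) : ℝ)} ≤
      (∑ i, (Nat.card V : ℝ) ^ Nat.card (U i) * (p : ℝ) ^ (K i).edgeSet.ncard) / t := by
  rw [le_div_iff₀' ht]
  calc t * G(V, p).real {G | t ≤ ∑ i, (Nat.card (Copy (K i) G) : ℝ)}
      ≤ ∫ G, ∑ i, (Nat.card (Copy (K i) G) : ℝ) ∂G(V, p) :=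
        mul_meas_ge_le_integral_of_nonneg (.of_forall fun _ ↦ by positivity) .of_finite t
    _ = ∑ i, ∫ G, (Nat.card (Copy (K i) G) : ℝ) ∂G(V, p) :=
        integral_finsetSum _ fun _ _ ↦ .of_finite
    _ ≤ _ := Finset.sum_le_sum fun i _ ↦ integral_card_copy_le p (K i)

theorem binomialRandom_real_isContained_le [Finite U] [Finite V] (K : SimpleGraph U) :
    G(V, p).real {G | K ⊑ G} ≤
      (Nat.card V : ℝ) ^ Nat.card U * (p : ℝ) ^ K.edgeSet.ncard := by
  have hcopy : {G : SimpleGraph V | K ⊑ G} = {G | (1 : ℝ) ≤ Nat.card (Copy K G)} :=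
    Set.ext fun G ↦ Finite.card_pos_iff.symm.trans (Nat.one_le_cast (α := ℝ)).symm
  simpa [hcopy] using
    binomialRandom_real_ge_sum_card_copy_le (V := V) p (fun _ : Unit ↦ K) one_pos

theorem binomialRandom_real_isContained_compl_le [Finite U] [Finite V] (K : SimpleGraph U) :
    G(V, p).real {G | K ⊑ Gᶜ} ≤
      (Nat.card V : ℝ) ^ Nat.card U * (1 - p : ℝ) ^ K.edgeSet.ncard := calc
  G(V, p).real {G | K ⊑ Gᶜ} = (G(V, p).map compl).real {G | K ⊑ G} :=
    (map_measureReal_apply (s := {G | K ⊑ G}) .of_discrete .of_discrete).symm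
  _ = G(V, σ p).real {G | K ⊑ G} := by rw [map_compl_binomialRandom]
  _ ≤ _ := binomialRandom_real_isContained_le (σ p) K

theorem exists_sum_card_copy_lt_and_free [Finite V] [Fintype ι] {U : ι → Type*}
    [∀ i, Finite (U i)] (K : ∀ i, SimpleGraph (U i)) [Finite W] (F : SimpleGraph W) {t : ℝ}
    (ht : 0 < t)
    (h : (∑ i, (Nat.card V : ℝ) ^ Nat.card (U i) * (p : ℝ) ^ (K i).edgeSet.ncard) / t +
      (Nat.card V : ℝ) ^ Nat.card W *
        ((p : ℝ) ^ F.edgeSet.ncard + (1 - p : ℝ) ^ F.edgeSet.ncard) < 1) :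
    ∃ G : SimpleGraph V, ∑ i, (Nat.card (Copy (K i) G) : ℝ) < t ∧ F.Free G ∧ F.Free Gᶜ := by
  set bad : Set (SimpleGraph V) := {G | t ≤ ∑ i, (Nat.card (Copy (K i) G) : ℝ)} ∪
    ({G | F ⊑ G} ∪ {G | F ⊑ Gᶜ})
  have hbad : G(V, p).real bad < 1 := by
    refine ((measureReal_union_le ..).trans ?_).trans_lt h
    rw [mul_add]
    refine add_le_add (binomialRandom_real_ge_sum_card_copy_le p K ht) ?_
    exact (measureReal_union_le ..).trans <| add_le_add (binomialRandom_real_isContained_le p F)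
      (binomialRandom_real_isContained_compl_le p F)
  have hne : bad ≠ Set.univ := fun huniv ↦ hbad.ne (huniv ▸ probReal_univ)
  obtain ⟨G, hG⟩ := (Set.ne_univ_iff_exists_notMem _).1 hne
  simp only [bad, Set.mem_union, Set.mem_ofPred_eq, not_or, not_le] at hG
  exact ⟨G, hG⟩

end

section

open Filter Topology Real

theorem tendsto_mul_pow_mul_rpow_pow_div {d : ℝ} {v e : ℕ} (a : ℝ)
    (h : (v : ℝ) - 1 < (1 - d) * e) :
    Tendsto (fun n : ℕ ↦ (a * n : ℝ) ^ v * ((n : ℝ) ^ (d - 1)) ^ e / n) atTop (𝓝 0) := by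
  have hlim : Tendsto (fun n : ℕ ↦ a ^ v * (n : ℝ) ^ (-((1 - d) * e - (v - 1)))) atTop (𝓝 0) := by
    simpa using ((tendsto_rpow_neg_atTop (sub_pos.2 h)).comp
      tendsto_natCast_atTop_atTop).const_mul (a ^ v)
  refine hlim.congr' ?_
  filter_upwards [eventually_gt_atTop 0] with n hn
  have hn' : (0 : ℝ) < n := Nat.cast_pos.2 hn
  rw [mul_pow, ← rpow_natCast (n : ℝ) v, ← rpow_mul_natCast hn'.le, mul_assoc, mul_div_assoc,
    ← rpow_add hn', ← rpow_sub_one hn'.ne']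
  ring_nf

theorem tendsto_sq_mul_exp_neg_mul_rpow {b s : ℝ} (a : ℝ) (hb : 0 < b) (hs : 0 < s) :
    Tendsto (fun n : ℕ ↦ (a * n : ℝ) ^ 2 * exp (-b * (n : ℝ) ^ s)) atTop (𝓝 0) := by
  have hlim := ((tendsto_rpow_mul_exp_neg_mul_atTop_nhds_zero (2 / s) b hb).comp
    ((tendsto_rpow_atTop hs).comp tendsto_natCast_atTop_atTop)).const_mul (a ^ 2)
  rw [mul_zero] at hlim
  refine hlim.congr fun n ↦ ?_
  have hpow : ((n : ℝ) ^ s) ^ (2 / s) = (n : ℝ) ^ 2 := by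
    rw [← rpow_mul n.cast_nonneg, mul_div_cancel₀ _ hs.ne', rpow_two]
  simp only [Function.comp_apply, hpow]
  ring

theorem pow_add_one_sub_pow_le {p : ℝ} (hp₀ : 0 ≤ p) (hp : p ≤ 1 / 2) (k : ℕ) :
    p ^ (k * k) + (1 - p) ^ (k * k) ≤ 2 * exp (-(p * k)) ^ k := by
  have h₁ : p ^ (k * k) ≤ (1 - p) ^ (k * k) := pow_le_pow_left₀ hp₀ (by linarith) _
  have h₂ : (1 - p) ^ (k * k) ≤ exp (-(p * k)) ^ k := calc
    (1 - p) ^ (k * k) ≤ exp (-p) ^ (k * k) :=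
      pow_le_pow_left₀ (by linarith) (one_sub_le_exp_neg p) _
    _ = exp (-(p * k)) ^ k := by rw [pow_mul, ← exp_nat_mul]; ring_nf
  linarith

theorem tendsto_mul_pow_mul_pow_add {p : ℕ → ℝ} {k : ℕ → ℕ} {b s : ℝ} (a : ℝ) (hb : 0 < b)
    (hs : 0 < s) (hp : ∀ᶠ n in atTop, p n ≤ 1 / 2)
    (hpk : ∀ᶠ n : ℕ in atTop, b * (n : ℝ) ^ s ≤ p n * k n) :
    Tendsto (fun n : ℕ ↦ (a * n : ℝ) ^ (2 * k n) *
      (p n ^ (k n * k n) + (1 - p n) ^ (k n * k n))) atTop (𝓝 0) := by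
  set r : ℕ → ℝ := fun n ↦ (a * n : ℝ) ^ 2 * exp (-b * (n : ℝ) ^ s)
  have hr : Tendsto r atTop (𝓝 0) := tendsto_sq_mul_exp_neg_mul_rpow a hb hs
  have hr₂ : Tendsto (fun n ↦ 2 * r n) atTop (𝓝 0) := by simpa using hr.const_mul 2
  refine squeeze_zero_norm' ?_ hr₂
  filter_upwards [eventually_gt_atTop 0, hr.eventually_le_const one_pos, hp, hpk]
    with n hn hrn hpn hpkn
  have hpk₀ : 0 < p n * k n := hpkn.trans_lt' (by positivity)
  have hp₀ : 0 ≤ p n := (pos_of_mul_pos_left hpk₀ (k n).cast_nonneg).le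
  have hp₁ : 0 ≤ 1 - p n := by linarith
  have hk₀ : k n ≠ 0 := fun hk ↦ by simp [hk] at hpk₀
  rw [pow_mul, norm_of_nonneg (by positivity)]
  calc ((a * n : ℝ) ^ 2) ^ k n * (p n ^ (k n * k n) + (1 - p n) ^ (k n * k n))
      ≤ ((a * n : ℝ) ^ 2) ^ k n * (2 * exp (-b * (n : ℝ) ^ s) ^ k n) := by
        gcongr
        refine (pow_add_one_sub_pow_le hp₀ hpn (k n)).trans ?_
        gcongr
        linarith
    _ = 2 * r n ^ k n := by simp only [r]; ring
    _ ≤ 2 * r n := by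
        gcongr
        exact pow_le_of_le_one (by positivity) hrn hk₀

theorem mul_rpow_le_rpow_mul_natCeil {x : ℝ} (hx : 0 < x) (c d ε : ℝ) :
    ε * x ^ (d - c) ≤ x ^ (d - 1) * ⌈ε * x ^ (1 - c)⌉₊ := calc
  ε * x ^ (d - c) = x ^ (d - 1) * (ε * x ^ (1 - c)) := by
    rw [mul_left_comm, ← rpow_add hx]
    ring_nf
  _ ≤ x ^ (d - 1) * ⌈ε * x ^ (1 - c)⌉₊ := by
    gcongr
    exact Nat.le_ceil _

end

section

open Filter Topology

theorem eventually_exists_free_and_not_purePair {ι : Type*} [Finite ι] {U : ι → Type*}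
    [∀ i, Finite (U i)] [∀ i, Nonempty (U i)] (K : ∀ i, SimpleGraph (U i)) {c d ε : ℝ}
    (hcd : c < d) (hd : d < 1)
    (hK : ∀ i, (Nat.card (U i) : ℝ) - 1 < (1 - d) * (K i).edgeSet.ncard) (hε : 0 < ε) :
    ∀ᶠ n : ℕ in atTop, ∃ G : SimpleGraph (Fin n), (∀ i, (K i).Free G) ∧
      ¬∃ A B : Set (Fin n), PurePair G A B ∧
        ε * (n : ℝ) ^ (1 - c) ≤ A.ncard ∧ ε * (n : ℝ) ^ (1 - c) ≤ B.ncard := by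
  have := Fintype.ofFinite ι
  set k : ℕ → ℕ := fun n ↦ ⌈ε * (n : ℝ) ^ (1 - c)⌉₊
  have hcopies : Tendsto (fun n : ℕ ↦ (∑ i, (2 * n : ℝ) ^ Nat.card (U i) *
      ((n : ℝ) ^ (d - 1)) ^ (K i).edgeSet.ncard) / n) atTop (𝓝 0) := by
    simp_rw [Finset.sum_div]
    simpa using tendsto_finsetSum _ fun i _ ↦ tendsto_mul_pow_mul_rpow_pow_div 2 (hK i)
  have hp : Tendsto (fun n : ℕ ↦ (n : ℝ) ^ (d - 1)) atTop (𝓝 0) := by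
    simpa [Function.comp_def] using
      (tendsto_rpow_neg_atTop (sub_pos.2 hd)).comp tendsto_natCast_atTop_atTop
  have hpk : ∀ᶠ n : ℕ in atTop, ε * (n : ℝ) ^ (d - c) ≤ (n : ℝ) ^ (d - 1) * k n := by
    filter_upwards [eventually_gt_atTop 0] with n hn
    exact mul_rpow_le_rpow_mul_natCeil (Nat.cast_pos.2 hn) c d ε
  have hsum := hcopies.add <| tendsto_mul_pow_mul_pow_add 2 hε (sub_pos.2 hcd)
    (hp.eventually_le_const one_half_pos) hpk
  rw [add_zero] at hsum
  filter_upwards [eventually_gt_atTop 0, hp.eventually_le_const one_pos,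
    hsum.eventually_lt_const one_pos] with n hn hpn hlt
  obtain ⟨G, hG, hfree, hfree'⟩ := exists_sum_card_copy_lt_and_free (V := Fin (2 * n))
    ⟨(n : ℝ) ^ (d - 1), by positivity, hpn⟩ K (completeBipartiteGraph (Fin (k n)) (Fin (k n)))
    (Nat.cast_pos.2 hn) (by simpa [ncard_edgeSet_completeBipartiteGraph, ← two_mul] using hlt)
  have hcount : n + ∑ i, Nat.card (Copy (K i) G) ≤ Nat.card (Fin (2 * n)) := by
    have : ∑ i, Nat.card (Copy (K i) G) < n := by exact_mod_cast hG
    rw [Nat.card_fin]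
    omega
  obtain ⟨f, hf⟩ := exists_embedding_free_comap K G hcount
  refine ⟨G.comap f, hf, ?_⟩
  rintro ⟨A, B, hAB, hA, hB⟩
  rcases hAB.isContained_or_isContained_compl (Nat.ceil_le.2 hA) (Nat.ceil_le.2 hB) with h | h
  · exact hfree (h.trans (Embedding.comap f G).isContained)
  · exact hfree' (h.trans
      (compl_isIndContained_compl.2 (Embedding.comap f G).isIndContained).isContained)

theorem statement_1_general {ι : Type*} [Finite ι] {W : ι → Type*} [∀ i, Finite (W i)]
    (H : ∀ i, SimpleGraph (W i)) {c : ℝ} (hc₀ : 0 ≤ c) (hc₁ : c < 1)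
    (hH : ∀ i, c < congestion (H i)) {ε : ℝ} (hε : 0 < ε) :
    ∀ᶠ n : ℕ in atTop, ∃ G : SimpleGraph (Fin n), (∀ i, (H i).Free G) ∧
      ¬∃ A B : Set (Fin n), PurePair G A B ∧
        ε * (n : ℝ) ^ (1 - c) ≤ A.ncard ∧ ε * (n : ℝ) ^ (1 - c) ≤ B.ncard := by
  choose J hJne hJ using fun i ↦ exists_subgraph_of_lt_congestion hc₀ (hH i)
  have hdense : ∀ᶠ d in 𝓝[>] c, ∀ i,
      ((J i).verts.ncard : ℝ) - 1 < (1 - d) * (J i).edgeSet.ncard :=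
    eventually_all.2 fun i ↦ nhdsWithin_le_nhds <|
      (Continuous.tendsto (by fun_prop) c).eventually_const_lt (hJ i)
  obtain ⟨d, hd, hcd, hd₁⟩ := (hdense.and (Ioo_mem_nhdsGT hc₁)).exists
  have := fun i ↦ (hJne i).to_subtype
  have hK (i) : (Nat.card (J i).verts : ℝ) - 1 < (1 - d) * (J i).coe.edgeSet.ncard := by
    rw [ncard_edgeSet_coe, Nat.card_coe_set_eq]
    exact hd i
  filter_upwards [eventually_exists_free_and_not_purePair _ hcd hd₁ hK hε]
    with n ⟨G, hfree, hpure⟩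
  exact ⟨G, fun i hi ↦ hfree i ((J i).coe_isContained.trans hi), hpure⟩

end

/-- if both `H` and `Hᶜ` have congestion more than `c`, then for every
`ε > 0` there is a graph `G` with `|G| > 1` that is `H`-free and `Hᶜ`-free and has no
pure pair `A, B` with `|A|, |B| ≥ ε|G|^{1-c}`. -/
theorem statement_1 (c : ℝ) (hc : 0 < c) {W : Type} [Fintype W] (H : SimpleGraph W)
    (h1 : c < congestion H) (h2 : c < congestion Hᶜ) (ε : ℝ) (hε : 0 < ε) :
    ∃ (n : ℕ) (G : SimpleGraph (Fin n)), 1 < n ∧ ¬ Contains G H ∧ ¬ Contains G Hᶜ ∧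
      ¬ ∃ A B : Set (Fin n), PurePair G A B ∧
          ε * (n : ℝ) ^ (1 - c) ≤ (A.ncard : ℝ) ∧
          ε * (n : ℝ) ^ (1 - c) ≤ (B.ncard : ℝ) := by
  obtain ⟨n, ⟨G, hfree, hpure⟩, hn⟩ := ((statement_1_general (fun b ↦ cond b H Hᶜ) hc.le
    (h1.trans_le (congestion_le_one H)) (Bool.forall_bool.2 ⟨h2, h1⟩) hε).and
    (Filter.eventually_gt_atTop 1)).exists
  exact ⟨n, G, hn, fun ⟨φ⟩ ↦ hfree true φ.isContained, fun ⟨φ⟩ ↦ hfree false φ.isContained, hpure⟩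

end PurePairs
end
end

section
/- Let k≥1 and ρ≥2 be integers, let K = kρ⁴, and let γ,λ>0 with λ ≤ 1/(512ρ²K) and γ ≤ 3/(256K). Let G be a graph, let δ>0 with δ ≤ 3ρ/(128K²) and (256Kδ/3)^{ρ-1}|G| ≤ 1, and let A=(A_i : i∈I) be a blockade in G of length K, with linkage at most λ, that is not (γ,δ)-divergent. Then there is an A-rainbow bi-levelling (L, M, C) with length k and height at most 3ρ−3, such that the A-size of C is at least 1/(64ρ³K). -/
noncomputable section

namespace PurePairs

open SimpleGraph

variable {V W : Type*}

/-! In a blockade that is not divergent, a subset of a block of relative size at least `δ` has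
neighbours in almost all of every other block. Deleting a maximal collection of small sets that fail
to expand therefore makes every set expand, by a factor `τ` or up to constant relative size. From
any vertex, a level sequence through distinct blocks then reaches constant relative size within
`ρ - 1` steps, and at the first step where it would do so, the linkage bound allows its last level
to be thinned so that the neighbourhood of the sequence stays small elsewhere.

Build such a sequence `Q` from a vertex `z`, and let subsets of its top level grade many blocks `C`.
Grow a second sequence from `z` in unused blocks, then a third from a vertex of its top level
avoiding the neighbourhood of `Q`; the second need not avoid it, so only a path of it is kept. The
result is a broom, whose top level sees almost everything in the sets `C`. Only the edges between
the path and `Q` keep the two from being parallel. Hence the top level of `Q` is split according to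
the last path vertex from which one can climb to the given vertex through `Q`, and the last level at
which such a climb can enter: from that path vertex, the climb and the rest of the broom are
parallel. Splitting `C` by these and by the first level of the broom with a neighbour gives at most
`ρ ^ 3` cells, and pigeonhole keeps `k` blocks of `C` with the same large cell. -/

section RelativeSize

/-- The size of `X` relative to `R`: the `A`-size of a blockade is the minimum of this over its
blocks `X` and the blocks `R` of `A` that contain them. It is `0` when `R` is empty. -/
def relSize (R X : Set V) : ℝ := X.ncard / R.ncard

lemma relSize_nonneg (R X : Set V) : 0 ≤ relSize R X := by unfold relSize; positivity

lemma relSize_empty (R : Set V) : relSize R ∅ = 0 := by simp [relSize]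

lemma nonempty_of_relSize_pos {R X : Set V} (h : 0 < relSize R X) : X.Nonempty := by
  rw [Set.nonempty_iff_ne_empty]
  rintro rfl
  exact h.ne' (relSize_empty R)

lemma mul_ncard_le_of_le_relSize {R X : Set V} {c : ℝ} (h : c ≤ relSize R X) :
    c * R.ncard ≤ X.ncard :=
  mul_le_of_le_div₀ (Nat.cast_nonneg _) (Nat.cast_nonneg _) h

lemma relSize_union_le (R X Y : Set V) : relSize R (X ∪ Y) ≤ relSize R X + relSize R Y := by
  unfold relSize
  rw [← add_div]
  gcongr
  exact_mod_cast Set.ncard_union_le X Y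

lemma relSize_union_of_disjoint [Finite V] (R : Set V) {X Y : Set V} (h : Disjoint X Y) :
    relSize R (X ∪ Y) = relSize R X + relSize R Y := by
  simp only [relSize, Set.ncard_union_eq h, Nat.cast_add, add_div]

lemma relSize_le_inter_add_sdiff (R X Y : Set V) :
    relSize R X ≤ relSize R (Y ∩ X) + relSize R (X \ Y) := by
  rw [Set.inter_comm]
  exact (Set.inter_union_sdiff X Y ▸ relSize_union_le R (X ∩ Y) (X \ Y) :)

lemma relSize_biUnion_le {ι : Type*} (R : Set V) (s : Finset ι) (X : ι → Set V) :
    relSize R (⋃ i ∈ s, X i) ≤ ∑ i ∈ s, relSize R (X i) := by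
  unfold relSize
  rw [← Finset.sum_div]
  gcongr
  exact_mod_cast Finset.set_ncard_biUnion_le s X

variable [Finite V]

lemma relSize_self {R : Set V} (hR : R.Nonempty) : relSize R R = 1 :=
  div_self (by exact_mod_cast hR.ncard_pos.ne')

@[gcongr]
lemma relSize_mono (R : Set V) {X Y : Set V} (h : X ⊆ Y) : relSize R X ≤ relSize R Y := by
  unfold relSize
  gcongr
  exact Set.toFinite Y

lemma relSize_sdiff_sub_le (R B X Y : Set V) :
    relSize R (B \ X) - relSize R (Y ∩ B) ≤ relSize R (B \ (X ∪ Y)) := by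
  have hinter : relSize R (Y ∩ (B \ X)) ≤ relSize R (Y ∩ B) := by
    gcongr
    exact Set.sdiff_subset
  rw [← Set.sdiff_sdiff]
  linarith [relSize_le_inter_add_sdiff R (B \ X) Y]

end RelativeSize

section Neighbourhoods

variable {G : SimpleGraph V}

lemma nbhd_mono {X Y : Set V} (h : X ⊆ Y) : nbhd G X ⊆ nbhd G Y :=
  fun _ ⟨x, hx, hxv⟩ ↦ ⟨x, h hx, hxv⟩

lemma nbhd_union (X Y : Set V) : nbhd G (X ∪ Y) = nbhd G X ∪ nbhd G Y := by
  ext v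
  simp only [nbhd, Set.mem_ofPred_eq, Set.mem_union, or_and_right, exists_or]

lemma nbhd_empty : nbhd G ∅ = ∅ := by simp [nbhd]

lemma adj_of_mem_nbhd_singleton {u v : V} (h : v ∈ nbhd G {u}) : G.Adj u v := by
  obtain ⟨x, rfl, h⟩ := h
  exact h

variable {I : Finset ℤ} {A : ℤ → Set V} {γ δ lam : ℝ} {i j : ℤ}

lemma relSize_nbhd_singleton_inter_le [Finite V] (hlink : LinkageLE G I A lam) (hlam : 0 ≤ lam)
    (hi : i ∈ I) (hj : j ∈ I) (hij : i ≠ j) {v : V} (hv : v ∈ A i) {D : Set V} (hD : D ⊆ A j) :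
    relSize (A j) (nbhd G {v} ∩ D) ≤ lam :=
  calc relSize (A j) (nbhd G {v} ∩ D)
      ≤ relSize (A j) (G.neighborSet v ∩ A j) := by
        gcongr
        exact fun x ↦ adj_of_mem_nbhd_singleton
    _ ≤ lam := div_le_of_le_mul₀ (Nat.cast_nonneg _) hlam (hlink i hi j hj hij v hv)

lemma Divergent.mono {F : Finset ℤ} (hF : F ⊆ I) (h : Divergent G F A γ δ) :
    Divergent G I A γ δ := by
  obtain ⟨i, hi, j, hj, h⟩ := h
  exact ⟨i, hF hi, j, hF hj, h⟩

lemma lt_relSize_nbhd_inter [Finite V] (hdiv : ¬ Divergent G I A γ δ)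
    (hi : i ∈ I) (hj : j ∈ I) (hij : i ≠ j) {X Y : Set V} (hX : X ⊆ A i) (hY : Y ⊆ A j)
    (hδ : δ ≤ relSize (A i) X) :
    relSize (A j) Y - γ < relSize (A j) (nbhd G X ∩ Y) := by
  by_contra! hle
  refine hdiv ⟨j, hj, i, hi, hij.symm, Y \ nbhd G X, Set.sdiff_subset.trans hY, X, hX,
    mul_ncard_le_of_le_relSize ?_, mul_ncard_le_of_le_relSize hδ,
    fun y hy x hx hyx ↦ hy.2 ⟨x, hx, hyx.symm⟩⟩
  linarith [relSize_le_inter_add_sdiff (A j) Y (nbhd G X)]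

end Neighbourhoods

section Grading

variable {G : SimpleGraph V} {ι κ : Type*}

lemma exists_subset_relSize_nbhd_inter_le [Finite V] {F : Finset ι} {A D : ι → Set V} {S : Set V}
    {p lam : ℝ} (hp : 0 < p)
    (hdeg : ∀ v ∈ S, ∀ i ∈ F, relSize (A i) (nbhd G {v} ∩ D i) ≤ lam)
    (hS : ∃ j ∈ F, p ≤ relSize (A j) (nbhd G S ∩ D j)) :
    ∃ T ⊆ S, (∃ j ∈ F, p ≤ relSize (A j) (nbhd G T ∩ D j)) ∧
      ∀ i ∈ F, relSize (A i) (nbhd G T ∩ D i) ≤ p + lam := by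
  obtain ⟨T, hTS, ⟨j, hj, hjT⟩, hmin⟩ := exists_minimal_le_of_wellFoundedLT
    (fun T ↦ ∃ j ∈ F, p ≤ relSize (A j) (nbhd G T ∩ D j)) S hS
  refine ⟨T, hTS, ⟨j, hj, hjT⟩, fun i hi ↦ ?_⟩
  obtain ⟨v, hv⟩ : T.Nonempty := by
    rw [Set.nonempty_iff_ne_empty]
    rintro rfl
    rw [nbhd_empty, Set.empty_inter, relSize_empty] at hjT
    exact hp.not_ge hjT
  have hsmall : relSize (A i) (nbhd G (T \ {v}) ∩ D i) < p := by
    by_contra! hlarge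
    exact (hmin ⟨i, hi, hlarge⟩ Set.sdiff_subset hv).2 rfl
  calc relSize (A i) (nbhd G T ∩ D i)
      = relSize (A i) ((nbhd G (T \ {v}) ∩ D i) ∪ (nbhd G {v} ∩ D i)) := by
        rw [← Set.union_inter_distrib_right, ← nbhd_union,
          Set.sdiff_union_of_subset (Set.singleton_subset_iff.2 hv)]
    _ ≤ p + lam := (relSize_union_le _ _ _).trans (add_le_add hsmall.le (hdeg v (hTS hv) i hi))

lemma relSize_nbhd_union_inter_le [Finite V] (R U X D : Set V) :
    relSize R (nbhd G (U ∪ X) ∩ D) ≤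
      relSize R (nbhd G X ∩ (D \ nbhd G U)) + relSize R (nbhd G U ∩ D) := by
  refine (relSize_mono R fun x hx ↦ ?_).trans (relSize_union_le R _ _)
  rw [nbhd_union] at hx
  by_cases hxU : x ∈ nbhd G U
  · exact Or.inr ⟨hxU, hx.2⟩
  · exact Or.inl ⟨hx.1.resolve_left hxU, hx.2, hxU⟩

/-- The sets `Y s` grade the sets `C s`: they increase with `s`, and `Y s` covers `C s` but has no
neighbours in `C t` for `t > s`. This is how a levelling with the `Y s` in its last level grades a
blockade, except that here the blocks are in the opposite order, so that the covering sets grow. -/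
structure IsGraded [Preorder κ] (G : SimpleGraph V) (Y C : κ → Set V) : Prop where
  mono : Monotone Y
  subset_nbhd : ∀ s, C s ⊆ nbhd G (Y s)
  disjoint_nbhd : ∀ s t, s < t → Disjoint (C t) (nbhd G (Y s))

lemma IsGraded.cons {n : ℕ} {Y C : Fin n → Set V} {U E : Set V} (h : IsGraded G Y C)
    (hE : E ⊆ nbhd G U) (hC : ∀ s, Disjoint (C s) (nbhd G U)) :
    IsGraded G (Fin.cons U fun s ↦ U ∪ Y s : Fin (n + 1) → Set V) (Fin.cons E C) where
  mono s t hst := by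
    cases s using Fin.cases with
    | zero => cases t using Fin.cases <;> simp
    | succ s =>
      cases t using Fin.cases with
      | zero => simp at hst
      | succ t => exact Set.union_subset_union_right U (h.mono (Fin.succ_le_succ_iff.1 hst))
  subset_nbhd s := by
    cases s using Fin.cases with
    | zero => exact hE
    | succ s => exact (h.subset_nbhd s).trans (nbhd_mono Set.subset_union_right)
  disjoint_nbhd s t hst := by
    cases t using Fin.cases with
    | zero => simp at hst
    | succ t =>
      cases s using Fin.cases with
      | zero => exact hC t
      | succ s =>
        simp only [Fin.cons_succ, nbhd_union, Set.disjoint_union_right]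
        exact ⟨hC t, h.disjoint_nbhd s t (Fin.succ_lt_succ_iff.1 hst)⟩

lemma IsGraded.subset_right [Preorder κ] {Y C C' : κ → Set V} (h : IsGraded G Y C)
    (hC : ∀ s, C' s ⊆ C s) : IsGraded G Y C' where
  mono := h.mono
  subset_nbhd s := (hC s).trans (h.subset_nbhd s)
  disjoint_nbhd s t hst := (h.disjoint_nbhd s t hst).mono_left (hC t)

lemma exists_isGraded [Finite V] {A : ι → Set V} {S : Set V} {p lam : ℝ}
    (hp : 0 < p) (hlam : 0 ≤ lam) (n : ℕ) (F : Finset ι) (D : ι → Set V) (hn : n ≤ F.card)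
    (hdeg : ∀ v ∈ S, ∀ i ∈ F, relSize (A i) (nbhd G {v} ∩ D i) ≤ lam)
    (hS : ∀ i ∈ F, n * (p + lam) ≤ relSize (A i) (nbhd G S ∩ D i)) :
    ∃ (Y : Fin n → Set V) (c : Fin n → ι) (C : Fin n → Set V), IsGraded G Y C ∧
      Function.Injective c ∧ (∀ s, Y s ⊆ S) ∧
      (∀ s, c s ∈ F ∧ C s ⊆ D (c s) ∧ p ≤ relSize (A (c s)) (C s)) ∧
      ∀ i ∈ F, i ∉ Set.range c → relSize (A i) (nbhd G (⋃ s, Y s) ∩ D i) ≤ n * (p + lam) := by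
  classical
  induction n generalizing F D with
  | zero =>
    refine ⟨Fin.elim0, Fin.elim0, Fin.elim0, ⟨fun s ↦ s.elim0, fun s ↦ s.elim0, fun s ↦ s.elim0⟩,
      fun s ↦ s.elim0, fun s ↦ s.elim0, fun s ↦ s.elim0, fun i _ _ ↦ ?_⟩
    simp [nbhd_empty, relSize_empty]
  | succ n ih =>
    push_cast at hS ⊢
    obtain ⟨i₀, hi₀⟩ : F.Nonempty := Finset.card_pos.1 (by omega)
    obtain ⟨U, hUS, ⟨j, hj, hjU⟩, hU⟩ := exists_subset_relSize_nbhd_inter_le hp hdeg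
      ⟨i₀, hi₀, le_trans (by nlinarith [mul_nonneg n.cast_nonneg (add_nonneg hp.le hlam)])
        (hS i₀ hi₀)⟩
    obtain ⟨Y, c, C, hgr, hinj, hYS, hcC, hrest⟩ := ih (F.erase j) (fun i ↦ D i \ nbhd G U)
      (by rw [Finset.card_erase_of_mem hj]; omega)
      (fun v hv i hi ↦ (relSize_mono _ (by gcongr; exact Set.sdiff_subset)).trans
        (hdeg v hv i (Finset.mem_of_mem_erase hi)))
      (fun i hi ↦ by
        have hi := Finset.mem_of_mem_erase hi
        have hUS : nbhd G S ∩ D i ⊆ nbhd G (U ∪ S) ∩ D i := by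
          gcongr; exact nbhd_mono Set.subset_union_right
        linarith [hS i hi, hU i hi, relSize_mono (A i) hUS,
          relSize_nbhd_union_inter_le (A i) U S (D i) (G := G)])
    refine ⟨_, Fin.cons j c, _, hgr.cons (E := nbhd G U ∩ D j) Set.inter_subset_left
      fun s ↦ Set.disjoint_sdiff_left.mono_left (hcC s).2.1,
      Fin.cons_injective_iff.2 ⟨?_, hinj⟩, ?_, ?_, fun i hi hic ↦ ?_⟩
    · rintro ⟨s, hs⟩
      exact (Finset.ne_of_mem_erase (hcC s).1) hs
    · exact Fin.cases hUS fun s ↦ Set.union_subset hUS (hYS s)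
    · exact Fin.cases ⟨hj, Set.inter_subset_right, hjU⟩ fun s ↦
        ⟨Finset.mem_of_mem_erase (hcC s).1, (hcC s).2.1.trans Set.sdiff_subset, (hcC s).2.2⟩
    · have hij : i ≠ j := fun h ↦ hic ⟨0, h.symm⟩
      have hY := hrest i (Finset.mem_erase.2 ⟨hij, hi⟩) fun ⟨s, hs⟩ ↦ hic ⟨s.succ, hs⟩
      have hunion : nbhd G (⋃ s, (Fin.cons U fun s ↦ U ∪ Y s : Fin (n + 1) → Set V) s) ⊆
          nbhd G (U ∪ ⋃ s, Y s) :=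
        nbhd_mono <| Set.iUnion_subset <| Fin.cases Set.subset_union_left fun s ↦
          Set.union_subset_union_right U (Set.subset_iUnion Y s)
      linarith [hU i hi, relSize_mono (A i) (Set.inter_subset_inter_left (D i) hunion),
        relSize_nbhd_union_inter_le (A i) U (⋃ s, Y s) (D i) (G := G)]

end Grading

section Expansion

variable {G : SimpleGraph V} {ι : Type*}

/-- The family `(B i : i ∈ F)` expands relative to the sizes of the blocks `A i`: each subset of
`B i` of relative size `x` has, in every other `B j`, neighbours of relative size at least
`min (τ * x) θ`. With `B = A` and `θ = 1/4` this is `Expanding`; subfamilies of a non-divergent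
blockade have this property only after some vertices are deleted. -/
def RelExpanding (G : SimpleGraph V) (F : Finset ι) (A B : ι → Set V) (τ θ : ℝ) : Prop :=
  ∀ i ∈ F, ∀ j ∈ F, i ≠ j → ∀ X ⊆ B i,
    min (τ * relSize (A i) X) θ ≤ relSize (A j) (nbhd G X ∩ B j)

lemma RelExpanding.subset {F F' : Finset ι} {A B : ι → Set V} {τ θ : ℝ}
    (h : RelExpanding G F A B τ θ) (hF : F' ⊆ F) : RelExpanding G F' A B τ θ :=
  fun i hi j hj ↦ h i (hF hi) j (hF hj)

/-- The family `(B i : i ∈ F)` with the sets `Z (i, j)` deleted from each `B i`. -/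
def erode {F : Finset ι} (B : ι → Set V) (Z : F × F → Set V) (i : ι) : Set V :=
  B i \ {x | ∃ e : F × F, e.1 = i ∧ x ∈ Z e}

/-- `Z` is an admissible collection of deletions: `Z (i, j)` is a small subset of `B i` that
witnesses the failure of expansion from `B i` to what is left of `B j`. -/
structure IsErosion (G : SimpleGraph V) {F : Finset ι} (A B : ι → Set V) (δ τ : ℝ)
    (Z : F × F → Set V) : Prop where
  subset : ∀ e, Z e ⊆ B e.1
  relSize_le : ∀ e, relSize (A e.1) (Z e) ≤ δ
  relSize_nbhd_le : ∀ e,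
    relSize (A e.2) (nbhd G (Z e) ∩ erode B Z e.2) ≤ τ * relSize (A e.1) (Z e)

lemma erode_subset {F : Finset ι} {B : ι → Set V} {Z : F × F → Set V} {i : ι} :
    erode B Z i ⊆ B i :=
  Set.sdiff_subset

lemma erode_anti {F : Finset ι} {B : ι → Set V} {Z Z' : F × F → Set V} (h : Z ≤ Z') (i : ι) :
    erode B Z' i ⊆ erode B Z i :=
  Set.sdiff_subset_sdiff_right fun _ ⟨e, he, hx⟩ ↦ ⟨e, he, h e hx⟩

lemma disjoint_erode {F : Finset ι} {B : ι → Set V} (Z : F × F → Set V) (e : F × F) :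
    Disjoint (Z e) (erode B Z e.1) :=
  Set.disjoint_left.2 fun _ hx hx' ↦ hx'.2 ⟨e, rfl, hx⟩

variable [Finite V] {F : Finset ι} {A B : ι → Set V} {Z : F × F → Set V} {δ τ : ℝ}

lemma IsErosion.le_relSize_erode (hZ : IsErosion G A B δ τ Z) {i : ι} (hi : i ∈ F) :
    relSize (A i) (B i) - F.card * δ ≤ relSize (A i) (erode B Z i) := by
  have hcover : B i ⊆ erode B Z i ∪ ⋃ j ∈ (Finset.univ : Finset F), Z (⟨i, hi⟩, j) := by
    intro x hx
    by_cases hxZ : ∃ e : F × F, e.1 = i ∧ x ∈ Z e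
    · obtain ⟨⟨⟨_, _⟩, j⟩, rfl, hxe⟩ := hxZ
      exact Or.inr (Set.mem_biUnion (Finset.mem_univ j) hxe)
    · exact Or.inl ⟨hx, hxZ⟩
  have hremoved : ∑ j : F, relSize (A i) (Z (⟨i, hi⟩, j)) ≤ F.card * δ :=
    (Finset.sum_le_card_nsmul _ _ δ fun j _ ↦ hZ.relSize_le (⟨i, hi⟩, j)).trans_eq (by simp)
  linarith [(relSize_mono (A i) hcover).trans (relSize_union_le _ _ _),
    relSize_biUnion_le (A i) (Finset.univ : Finset F) fun j ↦ Z (⟨i, hi⟩, j)]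

lemma IsErosion.relSize_nbhd_union_le (hZ : IsErosion G A B δ τ Z) {e : F × F} {X : Set V}
    (hX : X ⊆ erode B Z e.1)
    (hτ : relSize (A e.2) (nbhd G X ∩ erode B Z e.2) ≤ τ * relSize (A e.1) X) :
    relSize (A e.2) (nbhd G (Z e ∪ X) ∩ erode B Z e.2) ≤ τ * relSize (A e.1) (Z e ∪ X) := by
  rw [nbhd_union, Set.union_inter_distrib_right,
    relSize_union_of_disjoint _ ((disjoint_erode Z e).mono_right hX), mul_add]
  exact (relSize_union_le _ _ _).trans (add_le_add (hZ.relSize_nbhd_le e) hτ)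

lemma IsErosion.update [DecidableEq ι] (hZ : IsErosion G A B δ τ Z) {e : F × F} {X : Set V}
    (hX : X ⊆ erode B Z e.1) (hδ : relSize (A e.1) (Z e ∪ X) ≤ δ)
    (hτ : relSize (A e.2) (nbhd G X ∩ erode B Z e.2) ≤ τ * relSize (A e.1) X) :
    IsErosion G A B δ τ (Function.update Z e (Z e ∪ X)) := by
  have hle : Z ≤ Function.update Z e (Z e ∪ X) :=
    le_update_self_iff.2 Set.subset_union_left
  refine ⟨?_, ?_, fun e' ↦ (relSize_mono _ <|
    Set.inter_subset_inter_right _ (erode_anti hle _)).trans ?_⟩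
  · exact (Function.forall_update_iff Z fun e' Y ↦ Y ⊆ B e'.1).2
      ⟨Set.union_subset (hZ.subset e) (hX.trans erode_subset), fun e' _ ↦ hZ.subset e'⟩
  · exact (Function.forall_update_iff Z fun e' Y ↦ relSize (A e'.1) Y ≤ δ).2
      ⟨hδ, fun e' _ ↦ hZ.relSize_le e'⟩
  · exact (Function.forall_update_iff Z fun e' Y ↦
      relSize (A e'.2) (nbhd G Y ∩ erode B Z e'.2) ≤ τ * relSize (A e'.1) Y).2
      ⟨hZ.relSize_nbhd_union_le hX hτ, fun e' _ ↦ hZ.relSize_nbhd_le e'⟩ e'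

lemma relExpanding_erode_of_maximal {F : Finset ℤ} {A B : ℤ → Set V} {Z : F × F → Set V}
    {γ δ τ θ σ : ℝ} (hdiv : ¬ Divergent G F A γ δ) (hτ : 0 ≤ τ) (hB : ∀ i ∈ F, B i ⊆ A i)
    (hZ : Maximal (IsErosion G A B δ τ) Z) (hσ : ∀ i ∈ F, σ ≤ relSize (A i) (erode B Z i))
    (hθ : θ ≤ σ - γ) (hδτ : 2 * δ * τ ≤ σ - γ) : RelExpanding G F A (erode B Z) τ θ := by
  intro i hi j hj hij X hX
  by_contra! hX_lt
  obtain ⟨hXτ, hXθ⟩ := lt_min_iff.1 hX_lt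
  have lt_of_delta_le {Y : Set V} (hY : Y ⊆ A i) (hYδ : δ ≤ relSize (A i) Y) :
      σ - γ < relSize (A j) (nbhd G Y ∩ erode B Z j) := by
    have hBj : erode B Z j ⊆ A j := erode_subset.trans (hB j hj)
    linarith [hσ j hj, lt_relSize_nbhd_inter hdiv hi hj hij hY hBj hYδ]
  let e : F × F := (⟨i, hi⟩, ⟨j, hj⟩)
  have hXA : X ⊆ A i := hX.trans (erode_subset.trans (hB i hi))
  have hXδ : relSize (A i) X ≤ δ := by
    by_contra! h
    linarith [lt_of_delta_le hXA h.le]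
  have hZXδ : relSize (A i) (Z e ∪ X) ≤ δ := by
    by_contra! h
    have hlt := lt_of_delta_le (Set.union_subset ((hZ.prop.subset e).trans (hB i hi)) hXA) h.le
    have hle := hZ.prop.relSize_nbhd_union_le (e := e) hX hXτ.le
    have hsum : relSize (A i) (Z e ∪ X) ≤ δ + δ :=
      (relSize_union_le _ _ _).trans (add_le_add (hZ.prop.relSize_le e) hXδ)
    nlinarith [mul_le_mul_of_nonneg_left hsum hτ]
  have hXZ : X ⊆ Z e := by
    have hle : Z ≤ Function.update Z e (Z e ∪ X) := le_update_self_iff.2 Set.subset_union_left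
    have hge := hZ.2 (hZ.prop.update (e := e) hX hZXδ hXτ.le) hle e
    rw [Function.update_self] at hge
    exact Set.subset_union_right.trans hge
  have hX_empty : X = ∅ := disjoint_self.1 ((disjoint_erode Z e).mono hXZ hX)
  rw [hX_empty, relSize_empty, mul_zero] at hXτ
  exact (relSize_nonneg _ _).not_gt hXτ

lemma exists_relExpanding {F : Finset ℤ} {A B' : ℤ → Set V} {γ δ τ θ β : ℝ}
    (hdiv : ¬ Divergent G F A γ δ) (hδ : 0 ≤ δ) (hτ : 0 ≤ τ)
    (hB' : ∀ i ∈ F, B' i ⊆ A i) (hβ : ∀ i ∈ F, β ≤ relSize (A i) (B' i))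
    (hθ : θ ≤ β - F.card * δ - γ) (hδτ : 2 * δ * τ ≤ β - F.card * δ - γ) :
    ∃ B : ℤ → Set V, (∀ i, B i ⊆ B' i) ∧ (∀ i ∈ F, β - F.card * δ ≤ relSize (A i) (B i)) ∧
      RelExpanding G F A B τ θ := by
  obtain ⟨Z, -, hZ⟩ := exists_maximal_ge_of_wellFoundedGT
    (IsErosion G (F := F) A B' δ τ) (fun _ ↦ ∅) ⟨by simp, by simp [relSize_empty, hδ],
      by simp [nbhd_empty, relSize_empty]⟩
  have hsize (i) (hi : i ∈ F) : β - F.card * δ ≤ relSize (A i) (erode B' Z i) := by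
    linarith [hβ i hi, hZ.prop.le_relSize_erode hi]
  exact ⟨erode B' Z, fun i ↦ erode_subset, hsize,
    relExpanding_erode_of_maximal hdiv hτ hB' hZ hsize hθ hδτ⟩

end Expansion

section LevelSequences

variable {G : SimpleGraph V} {ι : Type*}

/-- The vertices with a neighbour in one of `L 0, …, L (n - 1)`. -/
def nbhdBelow (G : SimpleGraph V) (L : ℕ → Set V) (n : ℕ) : Set V := nbhd G (⋃ l < n, L l)

lemma mem_nbhdBelow {L : ℕ → Set V} {n : ℕ} {v : V} :
    v ∈ nbhdBelow G L n ↔ ∃ l < n, ∃ u ∈ L l, G.Adj u v := by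
  simp only [nbhdBelow, nbhd, Set.mem_iUnion, Set.mem_ofPred_eq]
  tauto

lemma nbhdBelow_zero (L : ℕ → Set V) : nbhdBelow G L 0 = ∅ := by
  simp [nbhdBelow, nbhd_empty]

lemma nbhdBelow_succ (L : ℕ → Set V) (n : ℕ) :
    nbhdBelow G L (n + 1) = nbhdBelow G L n ∪ nbhd G (L n) := by
  rw [nbhdBelow, Set.biUnion_lt_succ, nbhd_union, nbhdBelow]

lemma nbhdBelow_update_of_le (L : ℕ → Set V) (X : Set V) {n k : ℕ} (h : n ≤ k) :
    nbhdBelow G (Function.update L k X) n = nbhdBelow G L n := by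
  ext v
  simp only [mem_nbhdBelow]
  refine exists_congr fun l ↦ and_congr_right fun hl ↦ ?_
  rw [Function.update_of_ne (by omega)]

lemma exists_path {L : ℕ → Set V} {n : ℕ} (h : ∀ i < n, Covers G (L i) (L (i + 1))) {r : V}
    (hr : r ∈ L n) :
    ∃ p : ℕ → V, p n = r ∧ (∀ i ≤ n, p i ∈ L i) ∧ ∀ i < n, G.Adj (p i) (p (i + 1)) := by
  induction n generalizing r with
  | zero => exact ⟨fun _ ↦ r, rfl, by simpa using hr, by simp⟩
  | succ n ih =>
    obtain ⟨u, hu, hur⟩ := h n n.lt_succ_self r hr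
    obtain ⟨p, rfl, hpL, hadj⟩ := ih (fun i hi ↦ h i (by omega)) hu
    have hp {i} (hi : i ≤ n) : Function.update p (n + 1) r i = p i :=
      Function.update_of_ne (by omega) _ _
    refine ⟨Function.update p (n + 1) r, Function.update_self .., fun i hi ↦ ?_, fun i hi ↦ ?_⟩
    · rcases Nat.le_succ_iff.1 hi with hi | rfl
      · exact hp hi ▸ hpL i hi
      · rwa [Function.update_self]
    · rw [hp (by omega)]
      rcases Nat.lt_succ_iff_lt_or_eq.1 hi with hi | rfl
      · exact hp hi ▸ hadj i hi
      · rwa [Function.update_self]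

/-- The sequence `x, f 0, f 1, …`. -/
def consSeq {α : Type*} (x : α) (f : ℕ → α) : ℕ → α
  | 0 => x
  | n + 1 => f n

/-- The combinatorial core of a rainbow levelling: each `L i` with `i ≤ n` lies in the block
`B (q i)`, these blocks are distinct, and there are the edges and non-edges between the levels
that a levelling requires. The base `L 0` may be any set. -/
structure IsLevelSeq (G : SimpleGraph V) (F : Finset ι) (B : ι → Set V) (L : ℕ → Set V)
    (q : ℕ → ι) (n : ℕ) : Prop where
  mem : ∀ i ≤ n, q i ∈ F
  subset : ∀ i ≤ n, L i ⊆ B (q i)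
  injOn : Set.InjOn q (Set.Iic n)
  covers : ∀ i < n, Covers G (L i) (L (i + 1))
  anticomplete : ∀ i j, i + 2 ≤ j → j ≤ n → Anticomplete G (L i) (L j)

/-- The indices in `F` of the blocks that contain none of the levels `0, …, n`. -/
def freeBlocks [DecidableEq ι] (F : Finset ι) (q : ℕ → ι) (n : ℕ) : Finset ι :=
  F \ (Finset.range (n + 1)).image q

lemma mem_freeBlocks [DecidableEq ι] {F : Finset ι} {q : ℕ → ι} {n : ℕ} {j : ι} :
    j ∈ freeBlocks F q n ↔ j ∈ F ∧ ∀ i ≤ n, q i ≠ j := by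
  simp [freeBlocks]

lemma card_le_card_freeBlocks_add [DecidableEq ι] (F : Finset ι) (q : ℕ → ι) (n : ℕ) :
    F.card ≤ (freeBlocks F q n).card + (n + 1) := by
  have h := Finset.le_card_sdiff ((Finset.range (n + 1)).image q) F
  have h' : ((Finset.range (n + 1)).image q).card ≤ n + 1 :=
    Finset.card_image_le.trans_eq (Finset.card_range _)
  rw [freeBlocks]
  omega

namespace IsLevelSeq

variable {F F' : Finset ι} {B B' : ι → Set V} {L : ℕ → Set V} {q : ℕ → ι} {n : ℕ}

lemma of_singleton {z : V} {i₀ : ι} (hi₀ : i₀ ∈ F) (hz : z ∈ B i₀) :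
    IsLevelSeq G F B (fun _ ↦ {z}) (fun _ ↦ i₀) 0 where
  mem _ _ := hi₀
  subset _ _ := Set.singleton_subset_iff.2 hz
  injOn := by simp [Set.InjOn]
  covers := by simp
  anticomplete i j hij hj := by omega

lemma mono (h : IsLevelSeq G F B L q n) (hF : F ⊆ F') (hB : ∀ i ∈ F, B i ⊆ B' i) :
    IsLevelSeq G F' B' L q n where
  mem i hi := hF (h.mem i hi)
  subset i hi := (h.subset i hi).trans (hB _ (h.mem i hi))
  injOn := h.injOn
  covers := h.covers
  anticomplete := h.anticomplete

lemma nonempty (h : IsLevelSeq G F B L q n) (hn : (L n).Nonempty) {i : ℕ} (hi : i ≤ n) :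
    (L i).Nonempty := by
  induction hi using Nat.decreasingInduction with
  | self => exact hn
  | of_succ i hi ih =>
    obtain ⟨v, hv⟩ := ih
    obtain ⟨u, hu, -⟩ := h.covers i hi v hv
    exact ⟨u, hu⟩

lemma exists_isLevelSeq_singleton (h : IsLevelSeq G F B L q n) {r : V} (hr : r ∈ L n) :
    ∃ p : ℕ → V, p n = r ∧ (∀ i ≤ n, p i ∈ L i) ∧ IsLevelSeq G F B (fun i ↦ {p i}) q n := by
  obtain ⟨p, hpn, hpL, hadj⟩ := exists_path h.covers hr
  refine ⟨p, hpn, hpL, h.mem, fun i hi ↦ Set.singleton_subset_iff.2 (h.subset i hi (hpL i hi)),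
    h.injOn, fun i hi ↦ ?_, fun i j hij hj ↦ ?_⟩
  · rintro _ rfl
    exact ⟨p i, rfl, hadj i hi⟩
  · rintro _ rfl _ rfl
    exact h.anticomplete i j hij hj _ (hpL i (by omega)) _ (hpL j hj)

lemma shift (h : IsLevelSeq G F B L q n) {i k : ℕ} (hik : i + k ≤ n) :
    IsLevelSeq G F B (fun s ↦ L (i + s)) (fun s ↦ q (i + s)) k where
  mem s hs := h.mem (i + s) (by omega)
  subset s hs := h.subset (i + s) (by omega)
  injOn s hs t ht hst := by
    have := h.injOn (Set.mem_Iic.2 ((Nat.add_le_add_left hs i).trans hik))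
      (Set.mem_Iic.2 ((Nat.add_le_add_left ht i).trans hik)) hst
    omega
  covers s hs := h.covers (i + s) (by omega)
  anticomplete s t hst ht := h.anticomplete (i + s) (i + t) (by omega) (by omega)

lemma of_subset (h : IsLevelSeq G F B L q n) {L' : ℕ → Set V} (hL : ∀ i ≤ n, L' i ⊆ L i)
    (hcov : ∀ i < n, Covers G (L' i) (L' (i + 1))) : IsLevelSeq G F B L' q n where
  mem := h.mem
  subset i hi := (hL i hi).trans (h.subset i hi)
  injOn := h.injOn
  covers := hcov
  anticomplete i j hij hj u hu v hv :=
    h.anticomplete i j hij hj u (hL i (by omega) hu) v (hL j hj hv)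

lemma update_top (h : IsLevelSeq G F B L q n) {T : Set V} (hT : T ⊆ L n) :
    IsLevelSeq G F B (Function.update L n T) q n := by
  have hle (i) : Function.update L n T i ⊆ L i := by
    rcases eq_or_ne i n with rfl | hi
    · rwa [Function.update_self]
    · rw [Function.update_of_ne hi]
  refine h.of_subset (fun i _ ↦ hle i) fun i hi ↦ ?_
  rw [Function.update_of_ne hi.ne]
  exact fun v hv ↦ h.covers i hi v (hle _ hv)

lemma cons (h : IsLevelSeq G F B L q n) {X : Set V} {j : ι} (hj : j ∈ F) (hX : X ⊆ B j)
    (hjq : ∀ i ≤ n, j ≠ q i) (hcov : Covers G X (L 0))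
    (hanti : ∀ i, 1 ≤ i → i ≤ n → Anticomplete G X (L i)) :
    IsLevelSeq G F B (consSeq X L) (consSeq j q) (n + 1) where
  mem
    | 0, _ => hj
    | i + 1, hi => h.mem i (by omega)
  subset
    | 0, _ => hX
    | i + 1, hi => h.subset i (by omega)
  injOn
    | 0, _, 0, _, _ => rfl
    | 0, _, k + 1, hk, hik => absurd hik (hjq k (Nat.le_of_succ_le_succ hk))
    | i + 1, hi, 0, _, hik => absurd hik.symm (hjq i (Nat.le_of_succ_le_succ hi))
    | i + 1, hi, k + 1, hk, hik => congrArg (· + 1)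
        (h.injOn (Nat.le_of_succ_le_succ hi) (Nat.le_of_succ_le_succ hk) hik)
  covers
    | 0, _ => hcov
    | i + 1, hi => h.covers i (by omega)
  anticomplete
    | 0, k + 1, hik, hk => hanti k (by omega) (by omega)
    | i + 1, k + 1, hik, hk => h.anticomplete i k (by omega) (by omega)

lemma snoc [DecidableEq ι] (h : IsLevelSeq G F B L q n) {X : Set V} {j : ι}
    (hj : j ∈ freeBlocks F q n) (hX : X ⊆ nbhd G (L n) ∩ (B j \ nbhdBelow G L n)) :
    IsLevelSeq G F B (Function.update L (n + 1) X) (Function.update q (n + 1) j) (n + 1) := by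
  obtain ⟨hjF, hjq⟩ := mem_freeBlocks.1 hj
  have hL {i} (hi : i ≤ n) : Function.update L (n + 1) X i = L i :=
    Function.update_of_ne (by omega) _ _
  have hq {i} (hi : i ≤ n) : Function.update q (n + 1) j i = q i :=
    Function.update_of_ne (by omega) _ _
  refine ⟨fun i hi ↦ ?_, fun i hi ↦ ?_, fun i hi k hk hik ↦ ?_, fun i hi ↦ ?_,
    fun i k hik hk ↦ ?_⟩
  · rcases Nat.le_succ_iff.1 hi with hi | rfl
    · exact hq hi ▸ h.mem i hi
    · rwa [Function.update_self]
  · rcases Nat.le_succ_iff.1 hi with hi | rfl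
    · exact hL hi ▸ hq hi ▸ h.subset i hi
    · simp only [Function.update_self]
      exact fun x hx ↦ (hX hx).2.1
  · rcases Nat.le_succ_iff.1 hi with hi | rfl <;> rcases Nat.le_succ_iff.1 hk with hk | rfl
    · rw [hq hi, hq hk] at hik
      exact h.injOn hi hk hik
    · rw [hq hi, Function.update_self] at hik
      exact absurd hik (hjq i hi)
    · rw [hq hk, Function.update_self] at hik
      exact absurd hik.symm (hjq k hk)
    · rfl
  · rw [hL (by omega)]
    rcases Nat.lt_succ_iff_lt_or_eq.1 hi with hi | rfl
    · exact hL hi ▸ h.covers i hi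
    · rw [Function.update_self]
      exact fun x hx ↦ (hX hx).1
  · rw [hL (by omega)]
    rcases Nat.le_succ_iff.1 hk with hk | rfl
    · exact hL hk ▸ h.anticomplete i k hik hk
    · rw [Function.update_self]
      exact fun u hu v hv huv ↦ (hX hv).2.2 (mem_nbhdBelow.2 ⟨i, by omega, u, hu, huv⟩)

lemma concat (h : IsLevelSeq G F B L q n) {T : ℕ → Set V} {qT : ℕ → ι} {m : ℕ}
    (hT : IsLevelSeq G F B T qT m) (hT₀ : T 0 = L n) (hq : ∀ i < n, ∀ t ≤ m, q i ≠ qT t)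
    (hdisj : ∀ t, 1 ≤ t → t ≤ m → Disjoint (T t) (nbhdBelow G L n)) :
    IsLevelSeq G F B (fun i ↦ if i < n then L i else T (i - n))
      (fun i ↦ if i < n then q i else qT (i - n)) (n + m) where
  mem i hi := by
    split_ifs
    exacts [h.mem i (by omega), hT.mem _ (by omega)]
  subset i hi := by
    split_ifs
    exacts [h.subset i (by omega), hT.subset _ (by omega)]
  injOn i hi j hj hij := by
    simp only [Set.mem_Iic] at hi hj hij
    split_ifs at hij with hin hjn hjn
    · exact h.injOn (Set.mem_Iic.2 hin.le) (Set.mem_Iic.2 hjn.le) hij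
    · exact absurd hij (hq i hin _ (by omega))
    · exact absurd hij.symm (hq j hjn _ (by omega))
    · have := hT.injOn (Set.mem_Iic.2 (show i - n ≤ m by omega))
        (Set.mem_Iic.2 (show j - n ≤ m by omega)) hij
      omega
  covers i hi := by
    split_ifs with hin hin' hin'
    · exact h.covers i hin
    · rw [show i + 1 - n = 0 by omega, hT₀, show n = i + 1 by omega]
      exact h.covers i hin
    · omega
    · rw [show i + 1 - n = i - n + 1 by omega]
      exact hT.covers _ (by omega)
  anticomplete i j hij hj := by
    split_ifs with hin hjn hjn
    · exact h.anticomplete i j hij hjn.le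
    · rcases eq_or_ne j n with rfl | hjn'
      · rw [Nat.sub_self, hT₀]
        exact h.anticomplete i j hij le_rfl
      · exact fun u hu v hv huv ↦ (hdisj (j - n) (by omega) (by omega)).notMem_of_mem_left hv
          (mem_nbhdBelow.2 ⟨i, hin, u, hu, huv⟩)
    · omega
    · exact hT.anticomplete _ _ (by omega) (by omega)

lemma isLevelling (h : IsLevelSeq G F B L q n) (hn : 1 ≤ n) (h₀ : (L 0).ncard = 1)
    (hB : ∀ i ∈ F, ∀ j ∈ F, i ≠ j → Disjoint (B i) (B j)) : IsLevelling G L n := by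
  refine ⟨hn, h₀, fun i hi j hj hij ↦ ?_, fun i hi hin ↦ ?_,
    fun j _ hj i hij ↦ h.anticomplete i j hij hj⟩
  · exact (hB _ (h.mem i hi) _ (h.mem j hj) fun hq ↦ hij (h.injOn hi hj hq)).mono
      (h.subset i hi) (h.subset j hj)
  · obtain ⟨i, rfl⟩ := Nat.exists_eq_add_of_le' hi
    exact h.covers i hin

end IsLevelSeq

end LevelSequences

section Growth

variable {G : SimpleGraph V} {F : Finset ℤ} {A B : ℤ → Set V} {L : ℕ → Set V} {q : ℕ → ℤ}
  {n : ℕ} {z : V} {i₀ : ℤ} {lam τ θ η ζ : ℝ}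

/-- A level sequence with base `z`, a vertex of the block `B i₀`, such that in every unused block
the vertices with a neighbour below the last level have relative size at most `ζ`. -/
structure IsRooted (G : SimpleGraph V) (F : Finset ℤ) (A B : ℤ → Set V) (z : V) (i₀ : ℤ) (ζ : ℝ)
    (L : ℕ → Set V) (q : ℕ → ℤ) (n : ℕ) : Prop extends IsLevelSeq G F B L q n where
  zero_subset : L 0 ⊆ {z}
  q_zero : q 0 = i₀
  relSize_nbhdBelow_le : ∀ j ∈ freeBlocks F q n, relSize (A j) (nbhdBelow G L n ∩ B j) ≤ ζ

lemma IsRooted.of_singleton (hi₀ : i₀ ∈ F) (hz : z ∈ B i₀) (hζ : 0 ≤ ζ) :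
    IsRooted G F A B z i₀ ζ (fun _ ↦ {z}) (fun _ ↦ i₀) 0 where
  toIsLevelSeq := .of_singleton hi₀ hz
  zero_subset := subset_rfl
  q_zero := rfl
  relSize_nbhdBelow_le j _ := by rwa [nbhdBelow_zero, Set.empty_inter, relSize_empty]

lemma IsRooted.zero_eq_singleton (h : IsRooted G F A B z i₀ ζ L q n)
    (hn : (L n).Nonempty) : L 0 = {z} :=
  (Set.subset_singleton_iff_eq.1 h.zero_subset).resolve_left
    (h.nonempty hn n.zero_le).ne_empty

variable [Finite V]

lemma IsRooted.extend (h : IsRooted G F A B z i₀ ζ L q n) {T : Set V} (hT : T ⊆ L n) {j : ℤ}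
    (hj : j ∈ freeBlocks F q n) {y ζ' : ℝ}
    (hy : ∀ i ∈ freeBlocks F q n, relSize (A i) (nbhd G T ∩ (B i \ nbhdBelow G L n)) ≤ y)
    (hζ' : ζ + y ≤ ζ') :
    IsRooted G F A B z i₀ ζ'
      (Function.update (Function.update L n T) (n + 1) (nbhd G T ∩ (B j \ nbhdBelow G L n)))
      (Function.update q (n + 1) j) (n + 1) where
  toIsLevelSeq := (h.update_top hT).snoc hj <| by
    rw [Function.update_self, nbhdBelow_update_of_le L T le_rfl]
  zero_subset := by
    rw [Function.update_of_ne (by omega)]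
    rcases eq_or_ne 0 n with rfl | hn
    · rw [Function.update_self]
      exact hT.trans h.zero_subset
    · rw [Function.update_of_ne hn]
      exact h.zero_subset
  q_zero := by rw [Function.update_of_ne (by omega), h.q_zero]
  relSize_nbhdBelow_le i hi := by
    have hi' : i ∈ freeBlocks F q n := by
      rw [mem_freeBlocks] at hi ⊢
      exact ⟨hi.1, fun l hl ↦ by simpa [show l ≠ n + 1 by omega] using hi.2 l (by omega)⟩
    rw [nbhdBelow_update_of_le _ _ le_rfl, nbhdBelow_succ, nbhdBelow_update_of_le _ _ le_rfl,
      Function.update_self]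
    calc relSize (A i) ((nbhdBelow G L n ∪ nbhd G T) ∩ B i)
        ≤ relSize (A i) (nbhdBelow G L n ∩ B i ∪ nbhd G T ∩ (B i \ nbhdBelow G L n)) := by
          gcongr
          rintro v ⟨hv, hvB⟩
          by_cases hvL : v ∈ nbhdBelow G L n
          exacts [Or.inl ⟨hvL, hvB⟩, Or.inr ⟨hv.resolve_left hvL, hvB, hvL⟩]
      _ ≤ ζ' := by
          linarith [relSize_union_le (A i) (nbhdBelow G L n ∩ B i)
            (nbhd G T ∩ (B i \ nbhdBelow G L n)), h.relSize_nbhdBelow_le i hi', hy i hi']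

lemma IsRooted.mul_relSize_le (h : IsRooted G F A B z i₀ (2 * relSize (A (q n)) (L n)) L q n)
    (hexp : RelExpanding G F A B (τ + 2) θ) (hθ : 3 * η ≤ θ)
    (hη : relSize (A (q n)) (L n) < η) {j : ℤ} (hj : j ∈ freeBlocks F q n)
    (hjη : relSize (A j) (nbhd G (L n) ∩ (B j \ nbhdBelow G L n)) < η) :
    τ * relSize (A (q n)) (L n) ≤ relSize (A j) (nbhd G (L n) ∩ (B j \ nbhdBelow G L n)) := by
  obtain ⟨hjF, hjq⟩ := mem_freeBlocks.1 hj
  have hexpand := hexp _ (h.mem n le_rfl) j hjF (hjq n le_rfl) (L n) (h.subset n le_rfl)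
  have hsplit : relSize (A j) (nbhd G (L n) ∩ B j) ≤
      relSize (A j) (nbhd G (L n) ∩ (B j \ nbhdBelow G L n)) +
        relSize (A j) (nbhdBelow G L n ∩ B j) := by
    refine (relSize_mono _ fun v hv ↦ ?_).trans (relSize_union_le _ _ _)
    by_cases hvL : v ∈ nbhdBelow G L n
    exacts [Or.inr ⟨hvL, hv.2⟩, Or.inl ⟨hv.1, hv.2, hvL⟩]
  have hbelow := h.relSize_nbhdBelow_le j hj
  rcases min_le_iff.1 hexpand with hmin | hmin <;> nlinarith

lemma IsRooted.finish_or_grow (h : IsRooted G F A B z i₀ (2 * relSize (A (q n)) (L n)) L q n)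
    (hexp : RelExpanding G F A B (τ + 2) θ) (hlink : LinkageLE G F A lam)
    (hB : ∀ i ∈ F, B i ⊆ A i) (hlam : 0 ≤ lam) (hτ : 4 ≤ τ) (hθ : 3 * η ≤ θ)
    (hη : relSize (A (q n)) (L n) < η) (hn : n + 1 < F.card) :
    ∃ L' q', IsRooted G F A B z i₀ (3 * η + lam) L' q' (n + 1) ∧
        η ≤ relSize (A (q' (n + 1))) (L' (n + 1)) ∨
      IsRooted G F A B z i₀ (2 * relSize (A (q' (n + 1))) (L' (n + 1))) L' q' (n + 1) ∧
        τ * relSize (A (q n)) (L n) ≤ relSize (A (q' (n + 1))) (L' (n + 1)) ∧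
        relSize (A (q' (n + 1))) (L' (n + 1)) < η := by
  have hL₀ : 0 ≤ relSize (A (q n)) (L n) := relSize_nonneg _ _
  let D : ℤ → Set V := fun j ↦ B j \ nbhdBelow G L n
  by_cases hbig : ∃ j ∈ freeBlocks F q n, η ≤ relSize (A j) (nbhd G (L n) ∩ D j)
  · have hdeg : ∀ v ∈ L n, ∀ i ∈ freeBlocks F q n, relSize (A i) (nbhd G {v} ∩ D i) ≤ lam := by
      intro v hv i hi
      obtain ⟨hiF, hiq⟩ := mem_freeBlocks.1 hi
      exact relSize_nbhd_singleton_inter_le hlink hlam (h.mem n le_rfl) hiF (hiq n le_rfl)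
        (hB _ (h.mem n le_rfl) (h.subset n le_rfl hv)) (Set.sdiff_subset.trans (hB i hiF))
    obtain ⟨T, hT, ⟨j, hj, hjT⟩, hTle⟩ :=
      exists_subset_relSize_nbhd_inter_le (hL₀.trans_lt hη) hdeg hbig
    exact ⟨_, _, .inl ⟨h.extend hT hj hTle (by linarith), by simpa only [Function.update_self]⟩⟩
  · push Not at hbig
    obtain ⟨j, hj, hmax⟩ := (freeBlocks F q n).exists_max_image
      (fun j ↦ relSize (A j) (nbhd G (L n) ∩ D j))
      (Finset.card_pos.1 (by have := card_le_card_freeBlocks_add F q n; omega))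
    have hgrow := h.mul_relSize_le hexp hθ hη hj (hbig j hj)
    refine ⟨_, _, .inr ⟨h.extend subset_rfl hj hmax ?_, ?_⟩⟩ <;>
      simp only [Function.update_self]
    · nlinarith
    · exact ⟨hgrow, hbig j hj⟩

lemma relSize_singleton_lt (hexp : RelExpanding G F A B (τ + 2) θ)
    (hlink : LinkageLE G F A lam) (hB : ∀ i ∈ F, B i ⊆ A i) (hlam : 0 ≤ lam) (hτ : 1 ≤ τ)
    (hθ : 3 * η ≤ θ) (hη : lam < η) (hi₀ : i₀ ∈ F) (hz : z ∈ B i₀) (hF : 1 < F.card) :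
    relSize (A i₀) {z} < η := by
  by_contra! hle
  obtain ⟨j, hj, hji₀⟩ := F.exists_mem_ne hF i₀
  have hexpand := hexp i₀ hi₀ j hj hji₀.symm {z} (Set.singleton_subset_iff.2 hz)
  have hdeg := relSize_nbhd_singleton_inter_le hlink hlam hi₀ hj hji₀.symm (hB i₀ hi₀ hz) (hB j hj)
  rcases min_le_iff.1 hexpand with hmin | hmin <;> nlinarith

lemma exists_isRooted (hexp : RelExpanding G F A B (τ + 2) θ) (hlink : LinkageLE G F A lam)
    (hB : ∀ i ∈ F, B i ⊆ A i) (hlam : 0 ≤ lam) (hτ : 4 ≤ τ) (hθ : 3 * η ≤ θ) (hlamη : lam < η)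
    (hη : η ≤ 1) {ρ : ℕ} (hρ : 2 ≤ ρ) (hF : ρ ≤ F.card) (hi₀ : i₀ ∈ F) (hz : z ∈ B i₀)
    (hcard : (A i₀).ncard ≤ τ ^ (ρ - 1)) :
    ∃ L q m, 1 ≤ m ∧ m ≤ ρ - 1 ∧ IsRooted G F A B z i₀ (3 * η + lam) L q m ∧ L 0 = {z} ∧
      η ≤ relSize (A (q m)) (L m) := by
  have hcard₀ : (0 : ℝ) < (A i₀).ncard := by
    exact_mod_cast (Set.nonempty_of_mem (hB i₀ hi₀ hz)).ncard_pos
  by_contra! hnone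
  have grow (n : ℕ) (hn : n ≤ ρ - 1) : ∃ L q,
      IsRooted G F A B z i₀ (2 * relSize (A (q n)) (L n)) L q n ∧
      τ ^ n ≤ relSize (A (q n)) (L n) * (A i₀).ncard ∧ relSize (A (q n)) (L n) < η := by
    induction n with
    | zero =>
      refine ⟨_, _, .of_singleton hi₀ hz (mul_nonneg zero_le_two (relSize_nonneg _ _)), ?_,
        relSize_singleton_lt hexp hlink hB hlam (by linarith) hθ hlamη hi₀ hz (by omega)⟩
      simp [relSize, hcard₀.ne']
    | succ n ih =>
      obtain ⟨L, q, h, hpow, hlt⟩ := ih (by omega)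
      obtain ⟨L', q', ⟨h', hη'⟩ | ⟨h', hgrow, hlt'⟩⟩ :=
        h.finish_or_grow hexp hlink hB hlam hτ hθ hlt (by omega)
      · have hne := nonempty_of_relSize_pos ((hlam.trans_lt hlamη).trans_le hη')
        exact absurd hη' (hnone L' q' (n + 1) (by omega) hn h' (h'.zero_eq_singleton hne)).not_ge
      · refine ⟨L', q', h', ?_, hlt'⟩
        calc τ ^ (n + 1) = τ * τ ^ n := pow_succ' τ n
          _ ≤ τ * (relSize (A (q n)) (L n) * (A i₀).ncard) := by gcongr
          _ = τ * relSize (A (q n)) (L n) * (A i₀).ncard := by ring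
          _ ≤ relSize (A (q' (n + 1))) (L' (n + 1)) * (A i₀).ncard := by gcongr
  obtain ⟨L, q, -, hpow, hlt⟩ := grow (ρ - 1) le_rfl
  nlinarith

end Growth

section Growable

variable {G : SimpleGraph V} {I F : Finset ℤ} {A B : ℤ → Set V} {γ δ lam τ θ η : ℝ} {ρ : ℕ}

/-- A blockade of linkage at most `lam` that is not `(γ, δ)`-divergent, with parameters for which a
level sequence started at a vertex grows, by factors of `τ`, to a constant relative size within
`ρ - 1` steps. -/
structure IsGrowable (G : SimpleGraph V) (I : Finset ℤ) (A : ℤ → Set V) (γ δ lam τ : ℝ) (ρ : ℕ) :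
    Prop where
  isBlockade : IsBlockade I A
  linkageLE : LinkageLE G I A lam
  not_divergent : ¬ Divergent G I A γ δ
  γ_nonneg : 0 ≤ γ
  δ_nonneg : 0 ≤ δ
  lam_nonneg : 0 ≤ lam
  two_le_ρ : 2 ≤ ρ
  lam_le : lam ≤ 1 / 128
  card_mul_δ_add_γ_le : I.card * δ + γ ≤ 1 / 64
  four_le_τ : 4 ≤ τ
  δ_mul_τ_le : 2 * δ * (τ + 2) ≤ 3 / 64
  ncard_le_pow : ∀ i ∈ I, (A i).ncard ≤ τ ^ (ρ - 1)

namespace IsGrowable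

lemma subset (h : IsGrowable G I A γ δ lam τ ρ) (hF : F ⊆ I) : IsGrowable G F A γ δ lam τ ρ where
  isBlockade := ⟨fun i hi ↦ h.isBlockade.1 i (hF hi),
    fun i hi j hj ↦ h.isBlockade.2 i (hF hi) j (hF hj)⟩
  linkageLE i hi j hj := h.linkageLE i (hF hi) j (hF hj)
  not_divergent hdiv := h.not_divergent (hdiv.mono hF)
  γ_nonneg := h.γ_nonneg
  δ_nonneg := h.δ_nonneg
  lam_nonneg := h.lam_nonneg
  two_le_ρ := h.two_le_ρ
  lam_le := h.lam_le
  card_mul_δ_add_γ_le := by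
    have hδ := h.δ_nonneg
    calc F.card * δ + γ ≤ I.card * δ + γ := by gcongr
      _ ≤ 1 / 64 := h.card_mul_δ_add_γ_le
  four_le_τ := h.four_le_τ
  δ_mul_τ_le := h.δ_mul_τ_le
  ncard_le_pow i hi := h.ncard_le_pow i (hF hi)

variable [Finite V]

lemma exists_relExpanding (h : IsGrowable G I A γ δ lam τ ρ) {B' : ℤ → Set V} {β : ℝ}
    (hB' : ∀ i ∈ I, B' i ⊆ A i) (hβ : ∀ i ∈ I, β ≤ relSize (A i) (B' i)) (hβ' : 1 / 16 ≤ β) :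
    ∃ B : ℤ → Set V, (∀ i, B i ⊆ B' i) ∧ (∀ i ∈ I, β - 1 / 64 ≤ relSize (A i) (B i)) ∧
      RelExpanding G I A B (τ + 2) (β - 1 / 64) := by
  have hγ := h.γ_nonneg
  have hδ := h.card_mul_δ_add_γ_le
  obtain ⟨B, hB, hBs, hexp⟩ := PurePairs.exists_relExpanding (τ := τ + 2) (θ := β - 1 / 64)
    h.not_divergent h.δ_nonneg (by linarith [h.four_le_τ]) hB' hβ (by linarith)
    (by linarith [h.δ_mul_τ_le])
  exact ⟨B, hB, fun i hi ↦ le_trans (by linarith) (hBs i hi), hexp⟩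

lemma exists_isRooted (h : IsGrowable G I A γ δ lam τ ρ) (hexp : RelExpanding G I A B (τ + 2) θ)
    (hB : ∀ i ∈ I, B i ⊆ A i) (hθ : 3 * η ≤ θ) (hη : 1 / 64 ≤ η) (hη' : η ≤ 1) (hI : ρ ≤ I.card)
    {i₀ : ℤ} (hi₀ : i₀ ∈ I) {z : V} (hz : z ∈ B i₀) :
    ∃ L q m, 1 ≤ m ∧ m ≤ ρ - 1 ∧ IsRooted G I A B z i₀ (3 * η + lam) L q m ∧ L 0 = {z} ∧
      η ≤ relSize (A (q m)) (L m) :=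
  PurePairs.exists_isRooted hexp h.linkageLE hB h.lam_nonneg h.four_le_τ hθ
    (by linarith [h.lam_le]) hη' h.two_le_ρ hI hi₀ hz (h.ncard_le_pow i₀ hi₀)

lemma exists_isLevelSeq_disjoint (h : IsGrowable G I A γ δ lam τ ρ) (hI : ρ ≤ I.card) {i₀ : ℤ}
    (hi₀ : i₀ ∈ I) {R X : Set V} (hR : R ⊆ A i₀) (hRs : 1 / 16 ≤ relSize (A i₀) R)
    (hX : ∀ j ∈ I, j ≠ i₀ → 1 / 16 ≤ relSize (A j) (A j \ X)) :
    ∃ r ∈ R, ∃ T q m, 1 ≤ m ∧ m ≤ ρ - 1 ∧ IsLevelSeq G I A T q m ∧ T 0 = {r} ∧ q 0 = i₀ ∧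
      (∀ t, 1 ≤ t → t ≤ m → Disjoint (T t) X) ∧ 1 / 64 ≤ relSize (A (q m)) (T m) := by
  let B' : ℤ → Set V := Function.update (fun j ↦ A j \ X) i₀ R
  have hB'₀ : B' i₀ = R := Function.update_self ..
  have hB' {j : ℤ} (hj : j ≠ i₀) : B' j = A j \ X := Function.update_of_ne hj _ _
  have hB'A (j) (_ : j ∈ I) : B' j ⊆ A j := by
    rcases eq_or_ne j i₀ with rfl | hj
    · rwa [hB'₀]
    · rw [hB' hj]
      exact Set.sdiff_subset
  obtain ⟨B, hBB', hBs, hexp⟩ := h.exists_relExpanding hB'A (β := 1 / 16) (fun j hj ↦ by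
    rcases eq_or_ne j i₀ with rfl | hji₀
    · rwa [hB'₀]
    · rw [hB' hji₀]
      exact hX j hj hji₀) le_rfl
  have hBA (j) (hj : j ∈ I) : B j ⊆ A j := (hBB' j).trans (hB'A j hj)
  obtain ⟨r, hr⟩ : (B i₀).Nonempty :=
    nonempty_of_relSize_pos (lt_of_lt_of_le (by norm_num) (hBs i₀ hi₀))
  obtain ⟨T, q, m, hm, hmρ, hT, hT₀, hTs⟩ :=
    h.exists_isRooted hexp hBA (η := 1 / 64) (by norm_num) le_rfl (by norm_num) hI hi₀ hr
  refine ⟨r, hB'₀ ▸ hBB' i₀ hr, T, q, m, hm, hmρ, hT.toIsLevelSeq.mono subset_rfl hBA, hT₀,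
    hT.q_zero, fun t ht htm ↦ Set.disjoint_left.2 fun v hv ↦ ?_, hTs⟩
  have hqt : q t ≠ i₀ := fun hqt ↦ by
    have := hT.injOn htm (Set.mem_Iic.2 m.zero_le) (hqt.trans hT.q_zero.symm)
    omega
  exact (hB' hqt ▸ hBB' _ (hT.subset t htm hv)).2

end IsGrowable

end Growable

section Brooms

variable {G : SimpleGraph V} {I : Finset ℤ} {A B : ℤ → Set V} {γ δ lam τ θ : ℝ} {ρ : ℕ}
  {L T : ℕ → Set V} {q qT : ℕ → ℤ} {m l : ℕ}

/-- A path `p 0, …, p m` extended beyond `p m` by a level sequence avoiding `X`: the levels `N i`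
with `i ≤ m` are the singletons `{p i}`. -/
structure IsBroom (G : SimpleGraph V) (I : Finset ℤ) (A : ℤ → Set V) (X : Set V) (p : ℕ → V)
    (m l : ℕ) (N : ℕ → Set V) (q : ℕ → ℤ) : Prop extends IsLevelSeq G I A N q (m + l) where
  eq_singleton : ∀ i ≤ m, N i = {p i}
  disjoint : ∀ i, m < i → i ≤ m + l → Disjoint (N i) X

lemma IsBroom.mono {F : Finset ℤ} {X : Set V} {p : ℕ → V} (h : IsBroom G F A X p m l L q)
    (hF : F ⊆ I) : IsBroom G I A X p m l L q where
  toIsLevelSeq := h.toIsLevelSeq.mono hF fun _ _ ↦ subset_rfl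
  eq_singleton := h.eq_singleton
  disjoint := h.disjoint

lemma IsLevelSeq.exists_isBroom (hL : IsLevelSeq G I A L q m) (hT : IsLevelSeq G I A T qT l)
    {r : V} (hr : r ∈ L m) (hT₀ : T 0 = {r}) (hqT₀ : qT 0 = q m)
    (hqT : ∀ t, 1 ≤ t → t ≤ l → qT t ∈ freeBlocks I q m) {X : Set V}
    (hTX : ∀ t, 1 ≤ t → t ≤ l → Disjoint (T t) (X ∪ nbhdBelow G L m)) :
    ∃ p N qN, IsBroom G I A X p m l N qN ∧ p 0 ∈ L 0 ∧ N (m + l) = T l ∧ qN (m + l) = qT l := by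
  obtain ⟨p, hpm, hpL, hp⟩ := hL.exists_isLevelSeq_singleton hr
  have hconcat := hp.concat hT (hT₀.trans (by rw [hpm])) (fun i hi t ht ↦ ?_) fun t ht htl ↦ ?_
  · refine ⟨p, _, _, ⟨hconcat, fun i hi ↦ ?_, fun i hi hil ↦ ?_⟩, hpL 0 m.zero_le, ?_, ?_⟩
    · rcases hi.lt_or_eq with hi | rfl
      · exact if_pos hi
      · simp [hT₀, hpm]
    · rw [if_neg hi.le.not_gt]
      exact (hTX (i - m) (by omega) (by omega)).mono_right Set.subset_union_left
    · simp
    · simp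
  · rcases t.eq_zero_or_pos with rfl | ht₀
    · rw [hqT₀]
      exact fun hq ↦ hi.ne (hL.injOn (Set.mem_Iic.2 hi.le) (Set.mem_Iic.2 le_rfl) hq)
    · exact (mem_freeBlocks.1 (hqT t ht₀ ht)).2 i hi.le
  · refine (hTX t ht htl).mono_right (subset_trans (nbhd_mono ?_) Set.subset_union_right)
    exact Set.iUnion₂_mono fun i hi ↦ Set.singleton_subset_iff.2 (hpL i hi.le)

lemma IsGrowable.exists_isBroom [Finite V] (h : IsGrowable G I A γ δ lam τ ρ)
    (hexp : RelExpanding G I A B (τ + 2) θ) (hθ : 3 / 16 ≤ θ) (hB : ∀ i ∈ I, B i ⊆ A i)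
    (hI : 2 * ρ ≤ I.card) {i₀ : ℤ} (hi₀ : i₀ ∈ I) {z : V} (hz : z ∈ B i₀) {X : Set V}
    (hX : ∀ j ∈ I, j ≠ i₀ → 1 / 2 ≤ relSize (A j) (B j \ X)) :
    ∃ p m l N q, IsBroom G I A X p m l N q ∧ m ≤ ρ - 1 ∧ 1 ≤ l ∧ l ≤ ρ - 1 ∧ p 0 = z ∧
      1 / 64 ≤ relSize (A (q (m + l))) (N (m + l)) := by
  have hρ := h.two_le_ρ
  obtain ⟨L, q, m, -, hmρ, hL, hL₀, hLs⟩ := h.exists_isRooted hexp hB (η := 1 / 16)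
    (by linarith) (by norm_num) (by norm_num) (by omega) hi₀ hz
  have hLA := hL.toIsLevelSeq.mono subset_rfl hB
  have hqm : q m ∉ freeBlocks I q m := fun hq ↦ (mem_freeBlocks.1 hq).2 m le_rfl rfl
  let F := insert (q m) (freeBlocks I q m)
  have hFI : F ⊆ I := Finset.insert_subset (hL.mem m le_rfl) Finset.sdiff_subset
  have hFcard : ρ ≤ F.card := by
    have := card_le_card_freeBlocks_add I q m
    rw [Finset.card_insert_of_notMem hqm]
    omega
  have hrest (j) (hj : j ∈ F) (hjm : j ≠ q m) :
      1 / 16 ≤ relSize (A j) (A j \ (X ∪ nbhdBelow G L m)) := by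
    have hj' := (Finset.mem_insert.1 hj).resolve_left hjm
    obtain ⟨hjI, hjq⟩ := mem_freeBlocks.1 hj'
    have hbelow := hL.relSize_nbhdBelow_le j hj'
    have hXj := hX j hjI fun hj₀ ↦ hjq 0 m.zero_le (hL.q_zero.trans hj₀.symm)
    calc 1 / 16 ≤ relSize (A j) (B j \ X) - relSize (A j) (nbhdBelow G L m ∩ B j) := by
          linarith [h.lam_le]
      _ ≤ relSize (A j) (B j \ (X ∪ nbhdBelow G L m)) := relSize_sdiff_sub_le ..
      _ ≤ relSize (A j) (A j \ (X ∪ nbhdBelow G L m)) := by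
        gcongr
        exact hB j hjI
  obtain ⟨r, hr, T, qT, l, hl, hlρ, hT, hT₀, hqT₀, hTX, hTs⟩ :=
    (h.subset hFI).exists_isLevelSeq_disjoint hFcard (Finset.mem_insert_self _ _)
      (hLA.subset m le_rfl) hLs hrest
  have hqT (t) (ht : 1 ≤ t) (htl : t ≤ l) : qT t ∈ freeBlocks I q m := by
    refine (Finset.mem_insert.1 (hT.mem t htl)).resolve_left fun hq ↦ ?_
    have := hT.injOn htl (Set.mem_Iic.2 l.zero_le) (hq.trans hqT₀.symm)
    omega
  obtain ⟨p, N, qN, hN, hp₀, hNl, hqNl⟩ :=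
    hLA.exists_isBroom (hT.mono hFI fun _ _ ↦ subset_rfl) hr hT₀ hqT₀ hqT hTX
  exact ⟨p, m, l, N, qN, hN, hmρ, hl, hlρ, by simpa [hL₀] using hp₀, by rwa [hNl, hqNl]⟩

lemma IsGrowable.exists_isBroom_insert [Finite V] (h : IsGrowable G I A γ δ lam τ ρ)
    (hexp : RelExpanding G I A B (τ + 2) θ) (hθ : 3 / 16 ≤ θ) (hB : ∀ i ∈ I, B i ⊆ A i)
    {F : Finset ℤ} (hFI : F ⊆ I) (hF : 2 * ρ ≤ F.card) {i₀ : ℤ} (hi₀ : i₀ ∈ I) {z : V}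
    (hz : z ∈ B i₀) {X : Set V} (hX : ∀ j ∈ F, 1 / 2 ≤ relSize (A j) (B j \ X)) :
    ∃ p m l N q, IsBroom G I A X p m l N q ∧ (∀ t ≤ m + l, q t = i₀ ∨ q t ∈ F) ∧ m ≤ ρ - 1 ∧
      1 ≤ l ∧ l ≤ ρ - 1 ∧ p 0 = z ∧ 1 / 64 ≤ relSize (A (q (m + l))) (N (m + l)) := by
  have hF' : insert i₀ F ⊆ I := Finset.insert_subset hi₀ hFI
  obtain ⟨p, m, l, N, q, hN, hm, hl, hlρ, hp, hNs⟩ :=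
    (h.subset hF').exists_isBroom (hexp.subset hF') hθ (fun i hi ↦ hB i (hF' hi))
      (hF.trans (Finset.card_le_card (Finset.subset_insert i₀ F))) (Finset.mem_insert_self i₀ F) hz
      fun j hj hji₀ ↦ hX j ((Finset.mem_insert.1 hj).resolve_left hji₀)
  exact ⟨p, m, l, N, q, hN.mono hF', fun t ht ↦ Finset.mem_insert.1 (hN.mem t ht), hm, hl, hlρ, hp,
    hNs⟩

lemma relSize_nbhdBelow_inter_le {R D : Set V} {n : ℕ}
    (h : ∀ i < n, relSize R (nbhd G (L i) ∩ D) ≤ lam) :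
    relSize R (nbhdBelow G L n ∩ D) ≤ n * lam := by
  induction n with
  | zero => simp [nbhdBelow_zero, relSize_empty]
  | succ n ih =>
    rw [nbhdBelow_succ, Set.union_inter_distrib_right]
    push_cast
    linarith [relSize_union_le R (nbhdBelow G L n ∩ D) (nbhd G (L n) ∩ D),
      ih fun i hi ↦ h i (by omega), h n n.lt_succ_self]

lemma IsBroom.sub_le_relSize [Finite V] (h : IsGrowable G I A γ δ lam τ ρ) {X : Set V} {p : ℕ → V}
    (hN : IsBroom G I A X p m l L q) (hm : m ≤ ρ - 1)
    (hNs : 1 / 64 ≤ relSize (A (q (m + l))) (L (m + l))) {j : ℤ} (hj : j ∈ I)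
    (hjq : ∀ i ≤ m + l, j ≠ q i) {C : Set V} (hC : C ⊆ A j) :
    relSize (A j) C - ρ * lam - γ ≤
      relSize (A j) (nbhd G (L (m + l)) ∩ (C \ nbhdBelow G L (m + 1))) := by
  have hpath : relSize (A j) (nbhdBelow G L (m + 1) ∩ C) ≤ ρ * lam :=
    calc relSize (A j) (nbhdBelow G L (m + 1) ∩ C) ≤ (m + 1 : ℕ) * lam := by
          refine relSize_nbhdBelow_inter_le fun i hi ↦ ?_
          have hiN := hN.subset i (by omega)
          rw [hN.eq_singleton i (by omega), Set.singleton_subset_iff] at hiN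
          rw [hN.eq_singleton i (by omega)]
          exact relSize_nbhd_singleton_inter_le h.linkageLE h.lam_nonneg (hN.mem i (by omega)) hj
            (hjq i (by omega)).symm hiN hC
      _ ≤ ρ * lam := by
          have := h.two_le_ρ
          have := h.lam_nonneg
          gcongr
          exact Nat.add_le_of_le_sub (by omega) hm
  have hδ : δ ≤ relSize (A (q (m + l))) (L (m + l)) := by
    have hτ := h.four_le_τ
    have hδτ := h.δ_mul_τ_le
    have hδ := h.δ_nonneg
    nlinarith
  linarith [relSize_le_inter_add_sdiff (A j) C (nbhdBelow G L (m + 1)),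
    lt_relSize_nbhd_inter h.not_divergent (hN.mem _ le_rfl) hj (hjq _ le_rfl).symm
      (hN.subset _ le_rfl) ((Set.sdiff_subset (t := nbhdBelow G L (m + 1))).trans hC) hδ]

end Brooms

section GradedTop

variable {G : SimpleGraph V} {I : Finset ℤ} {A B : ℤ → Set V} {γ δ lam τ p : ℝ} {ρ n m : ℕ}
  {Q : ℕ → Set V} {q : ℕ → ℤ}

lemma IsGrowable.exists_isGraded_top [Finite V] (h : IsGrowable G I A γ δ lam τ ρ)
    (hB : ∀ i ∈ I, B i ⊆ A i) (hBs : ∀ i ∈ I, 63 / 64 ≤ relSize (A i) (B i)) {z : V} {i₀ : ℤ}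
    (hQ : IsRooted G I A B z i₀ (3 / 16 + lam) Q q m) (hQs : 1 / 16 ≤ relSize (A (q m)) (Q m))
    (hn : n ≤ (freeBlocks I q m).card) (hp : 0 < p) (hnp : n * (p + lam) ≤ 1 / 4) :
    ∃ (Y : Fin n → Set V) (c : Fin n → ℤ) (C : Fin n → Set V), IsGraded G Y C ∧
      Function.Injective c ∧ (∀ s, Y s ⊆ Q m) ∧
      (∀ s, c s ∈ freeBlocks I q m ∧ C s ⊆ B (c s) \ nbhdBelow G Q m ∧
        p ≤ relSize (A (c s)) (C s)) ∧
      ∀ j ∈ freeBlocks I q m, j ∉ Set.range c →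
        1 / 2 ≤ relSize (A j) (B j \ (nbhdBelow G Q m ∪ nbhd G (⋃ s, Y s))) := by
  have hlam := h.lam_le
  have hγ : γ ≤ 1 / 64 := by nlinarith [h.card_mul_δ_add_γ_le, h.δ_nonneg]
  have hδ : δ ≤ 1 / 16 := by nlinarith [h.δ_mul_τ_le, h.δ_nonneg, h.four_le_τ]
  have hQA : Q m ⊆ A (q m) := (hQ.subset m le_rfl).trans (hB _ (hQ.mem m le_rfl))
  let D : ℤ → Set V := fun j ↦ B j \ nbhdBelow G Q m
  have hDA (j) (hj : j ∈ I) : D j ⊆ A j := Set.sdiff_subset.trans (hB j hj)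
  have hDs (j) (hj : j ∈ freeBlocks I q m) : 25 / 32 ≤ relSize (A j) (D j) := by
    linarith [hBs j (mem_freeBlocks.1 hj).1, hQ.relSize_nbhdBelow_le j hj,
      relSize_le_inter_add_sdiff (A j) (B j) (nbhdBelow G Q m)]
  have hdeg (v) (hv : v ∈ Q m) (j) (hj : j ∈ freeBlocks I q m) :
      relSize (A j) (nbhd G {v} ∩ D j) ≤ lam := by
    obtain ⟨hjI, hjq⟩ := mem_freeBlocks.1 hj
    exact relSize_nbhd_singleton_inter_le h.linkageLE h.lam_nonneg (hQ.mem m le_rfl) hjI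
      (hjq m le_rfl) (hQA hv) (hDA j hjI)
  have htop (j) (hj : j ∈ freeBlocks I q m) :
      n * (p + lam) ≤ relSize (A j) (nbhd G (Q m) ∩ D j) := by
    obtain ⟨hjI, hjq⟩ := mem_freeBlocks.1 hj
    linarith [hDs j hj, lt_relSize_nbhd_inter h.not_divergent (hQ.mem m le_rfl) hjI (hjq m le_rfl)
      hQA (hDA j hjI) (hδ.trans hQs)]
  obtain ⟨Y, c, C, hYC, hc, hYQ, hC, hrest⟩ :=
    exists_isGraded hp h.lam_nonneg n (freeBlocks I q m) D hn hdeg htop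
  refine ⟨Y, c, C, hYC, hc, hYQ, hC, fun j hj hjc ↦ ?_⟩
  rw [← Set.sdiff_sdiff]
  linarith [hDs j hj, hrest j hj hjc, relSize_le_inter_add_sdiff (A j) (D j) (nbhd G (⋃ s, Y s))]

end GradedTop

section Climbing

variable {G : SimpleGraph V} {Q : ℕ → Set V} {p : ℕ → V} {u v : V} {i j l m : ℕ}

/-- `Climbs G Q v j l u`: there is a path from `v` to `u` whose vertices after `v` lie in
`Q j, …, Q l`, in this order, with `1 ≤ j`. -/
inductive Climbs (G : SimpleGraph V) (Q : ℕ → Set V) (v : V) (j : ℕ) : ℕ → V → Prop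
  | base {u : V} (hj : 1 ≤ j) (hu : u ∈ Q j) (h : G.Adj v u) : Climbs G Q v j j u
  | step {l : ℕ} {u w : V} (h : Climbs G Q v j l u) (hw : w ∈ Q (l + 1)) (huw : G.Adj u w) :
      Climbs G Q v j (l + 1) w

lemma Climbs.mem (h : Climbs G Q v j l u) : u ∈ Q l := by
  cases h <;> assumption

lemma Climbs.one_le (h : Climbs G Q v j l u) : 1 ≤ j := by
  induction h <;> assumption

lemma Climbs.le (h : Climbs G Q v j l u) : j ≤ l := by
  induction h with
  | base => exact le_rfl
  | step _ _ _ ih => exact ih.trans (Nat.le_succ _)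

lemma climbs_of_covers (hQ : ∀ i < m, Covers G (Q i) (Q (i + 1))) (hv : Q 0 ⊆ {v}) (hl : 1 ≤ l)
    (hlm : l ≤ m) (hu : u ∈ Q l) : Climbs G Q v 1 l u := by
  induction l, hl using Nat.le_induction generalizing u with
  | base =>
    obtain ⟨x, hx, hxu⟩ := hQ 0 (by omega) u hu
    exact .base le_rfl hu (hv hx ▸ hxu)
  | succ l _ ih =>
    obtain ⟨x, hx, hxu⟩ := hQ l (by omega) u hu
    exact .step (ih (by omega) hx) hu hxu

/-- The vertices in `Q l` for which `p i` is the last of `p 0, …, p m` from which they can be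
climbed to, and `j` the last level at which such a climb can enter. -/
def climbClass (G : SimpleGraph V) (Q : ℕ → Set V) (p : ℕ → V) (m i j l : ℕ) : Set V :=
  {u | Climbs G Q (p i) j l u ∧ (∀ i', i < i' → i' ≤ m → ∀ j', ¬ Climbs G Q (p i') j' l u) ∧
    ∀ j', j < j' → ¬ Climbs G Q (p i) j' l u}

lemma climbClass_subset : climbClass G Q p m i j l ⊆ Q l := fun _ hu ↦ hu.1.mem

lemma exists_mem_climbClass (h : Climbs G Q (p 0) j l u) :
    ∃ i ≤ m, ∃ j, 1 ≤ j ∧ j ≤ l ∧ u ∈ climbClass G Q p m i j l := by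
  classical
  let P : ℕ → Prop := fun i ↦ ∃ j, Climbs G Q (p i) j l u
  let i := Nat.findGreatest P m
  obtain ⟨j₀, hj₀⟩ : P i := Nat.findGreatest_spec m.zero_le ⟨j, h⟩
  let j := Nat.findGreatest (fun j ↦ Climbs G Q (p i) j l u) l
  have hj : Climbs G Q (p i) j l u :=
    Nat.findGreatest_spec (P := fun j ↦ Climbs G Q (p i) j l u) hj₀.le hj₀
  exact ⟨i, Nat.findGreatest_le m, j, hj.one_le, hj.le, hj,
    fun i' hii' hi' j' hj' ↦ Nat.findGreatest_is_greatest hii' hi' ⟨j', hj'⟩,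
    fun j' hjj' hj' ↦ Nat.findGreatest_is_greatest hjj' hj'.le hj'⟩

lemma covers_climbClass (hj : j ≤ l) :
    Covers G (climbClass G Q p m i j l) (climbClass G Q p m i j (l + 1)) := by
  rintro w ⟨hw, hlast, henter⟩
  cases hw with
  | base => omega
  | step hu hw huw =>
    exact ⟨_, ⟨hu, fun i' hi hi' j' h ↦ hlast i' hi hi' j' (h.step hw huw),
      fun j' hj' h ↦ henter j' hj' (h.step hw huw)⟩, huw⟩

lemma adj_of_mem_climbClass (hu : u ∈ climbClass G Q p m i j j) : G.Adj (p i) u := by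
  cases hu.1 with
  | base _ _ h => exact h
  | step h => exact absurd h.le (by omega)

lemma not_adj_of_mem_climbClass (hl : 1 ≤ l) (hu : u ∈ climbClass G Q p m i j l) {i' : ℕ}
    (hi : i < i') (hi' : i' ≤ m) : ¬ G.Adj (p i') u :=
  fun h ↦ hu.2.1 i' hi hi' l (.base hl hu.1.mem h)

lemma not_adj_self_of_mem_climbClass (hl : 1 ≤ l) (hu : u ∈ climbClass G Q p m i j l)
    (hj : j < l) : ¬ G.Adj (p i) u :=
  fun h ↦ hu.2.2 l hj (.base hl hu.1.mem h)

/-- The levels of the climb from `p i` through the classes that enter at level `j`. -/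
def climbLevels (G : SimpleGraph V) (Q : ℕ → Set V) (p : ℕ → V) (m i j : ℕ) : ℕ → Set V :=
  consSeq {p i} fun s ↦ climbClass G Q p m i j (j + s)

lemma isLevelSeq_climbLevels {I : Finset ℤ} {A : ℤ → Set V} {q : ℕ → ℤ} {M : ℕ} {i₀ : ℤ}
    (h : IsLevelSeq G I A Q q M) (hi₀ : i₀ ∈ I) (hp : p i ∈ A i₀)
    (hq : ∀ l, 1 ≤ l → l ≤ M → i₀ ≠ q l) (hj : 1 ≤ j) (hjM : j ≤ M) :
    IsLevelSeq G I A (climbLevels G Q p m i j) (consSeq i₀ fun s ↦ q (j + s)) (M - j + 1) := by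
  obtain ⟨n, rfl⟩ := Nat.exists_eq_add_of_le hjM
  rw [Nat.add_sub_cancel_left]
  refine ((h.shift le_rfl).of_subset (fun s _ ↦ climbClass_subset) fun s _ ↦
    covers_climbClass (Nat.le_add_right j s)).cons hi₀ (Set.singleton_subset_iff.2 hp)
    (fun s _ ↦ hq _ (by omega) (by omega)) (fun u hu ↦ ⟨p i, rfl, adj_of_mem_climbClass hu⟩) ?_
  rintro s hs - _ rfl u hu
  exact not_adj_self_of_mem_climbClass (by omega) hu (by omega)

end Climbing

section Forks

variable {G : SimpleGraph V} {I : Finset ℤ} {A : ℤ → Set V} {κ : Type*} {L M : ℕ → Set V}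
  {qL qM : ℕ → ℤ} {a b : ℕ} {v : V} {c e : κ → ℤ} {Y C : κ → Set V} {μ : ℝ}

lemma IsLevelling.reaches (h : IsLevelling G L a) {D : Set V} (hne : ∀ i ≤ a, Disjoint (L i) D)
    (hD : D ⊆ nbhd G (L a)) (hD' : Disjoint D (nbhdBelow G L a)) : Reaches G L a D := by
  obtain ⟨-, h₀, hdisj, hcov, hanti⟩ := h
  refine ⟨by omega, by simpa using h₀, fun i hi j hj hij ↦ ?_, fun i hi hia ↦ ?_,
    fun i hi hia l hl ↦ ?_⟩
  · beta_reduce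
    split_ifs
    · omega
    · exact (hne j (by omega)).symm
    · exact hne i (by omega)
    · exact hdisj i (by omega) j (by omega) hij
  · beta_reduce
    rw [if_neg (show i - 1 ≠ a + 1 by omega)]
    split_ifs with h
    · subst h
      exact hD
    · exact hcov i hi (by omega)
  · beta_reduce
    rw [if_neg (show l ≠ a + 1 by omega)]
    split_ifs with h
    · exact fun u hu w hw huw ↦
        hD'.notMem_of_mem_left hw (mem_nbhdBelow.2 ⟨l, by omega, u, hu, huw⟩)
    · exact hanti i hi (by omega) l hl

/-- The sets `C s` lie in distinct blocks `A (c s)`. -/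
structure IsTransversal (I : Finset ℤ) (A : ℤ → Set V) (c : κ → ℤ) (C : κ → Set V) : Prop where
  injective : Function.Injective c
  mem : ∀ s, c s ∈ I
  subset : ∀ s, C s ⊆ A (c s)

/-- The sets `C s` can be put above the levels `L 0, …, L n`: they are covered by the top level,
have no neighbours in the lower ones, and lie in blocks other than those of the levels. -/
structure IsAttached (G : SimpleGraph V) (L : ℕ → Set V) (q : ℕ → ℤ) (n : ℕ) (c : κ → ℤ)
    (C : κ → Set V) : Prop where
  ne : ∀ s, ∀ i ≤ n, c s ≠ q i
  subset_nbhd : ∀ s, C s ⊆ nbhd G (L n)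
  disjoint_nbhdBelow : ∀ s, Disjoint (C s) (nbhdBelow G L n)

lemma IsAttached.reaches (h : IsAttached G L qL a c C) (hA : IsBlockade I A)
    (hC : IsTransversal I A c C) (hL : IsLevelSeq G I A L qL a) (hL' : IsLevelling G L a) :
    Reaches G L a (⋃ s, C s) :=
  hL'.reaches (fun i hi ↦ Set.disjoint_iUnion_right.2 fun s ↦
      (hA.2 _ (hL.mem i hi) _ (hC.mem s) (h.ne s i hi).symm).mono (hL.subset i hi) (hC.subset s))
    (Set.iUnion_subset h.subset_nbhd) (Set.disjoint_iUnion_left.2 h.disjoint_nbhdBelow)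

/-- Two level sequences that start at the same vertex `v`, and are otherwise anticomplete to each
other and in different blocks. -/
structure IsFork (G : SimpleGraph V) (I : Finset ℤ) (A : ℤ → Set V) (v : V) (L : ℕ → Set V)
    (qL : ℕ → ℤ) (a : ℕ) (M : ℕ → Set V) (qM : ℕ → ℤ) (b : ℕ) : Prop where
  left : IsLevelSeq G I A L qL a
  right : IsLevelSeq G I A M qM b
  one_le_left : 1 ≤ a
  one_le_right : 1 ≤ b
  left_zero : L 0 = {v}
  right_zero : M 0 = {v}
  ne : ∀ i ≤ a, ∀ j, 1 ≤ j → j ≤ b → qL i ≠ qM j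
  anticomplete : ∀ i, 1 ≤ i → i ≤ a → ∀ j, 1 ≤ j → j ≤ b → Anticomplete G (M j) (L i)

lemma IsFork.parallel (h : IsFork G I A v L qL a M qM b) (hA : IsBlockade I A) :
    Parallel G L a M b := by
  refine ⟨h.left_zero.trans h.right_zero.symm, ?_, fun x hx y hy ↦ ?_⟩
  · simp only [Set.disjoint_iUnion_left, Set.disjoint_iUnion_right, Finset.mem_Icc]
    rintro i ⟨-, hi⟩ j ⟨hj, hjb⟩
    exact (hA.2 _ (h.right.mem j hjb) _ (h.left.mem i hi) (h.ne i hi j hj hjb).symm).mono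
      (h.right.subset j hjb) (h.left.subset i hi)
  · simp only [Set.mem_iUnion, Finset.mem_Icc] at hx hy
    obtain ⟨j, ⟨hj, hjb⟩, hx⟩ := hx
    obtain ⟨i, ⟨hi, hia⟩, hy⟩ := hy
    exact h.anticomplete i hi hia j hj hjb x hx y hy

/-- The family `C`, reindexed by integers along the injection `e`. -/
def blocksAlong (e : κ → ℤ) (C : κ → Set V) : ℤ → Set V := Function.extend e C fun _ ↦ ∅

lemma blocksAlong_apply (he : Function.Injective e) (s : κ) : blocksAlong e C (e s) = C s :=
  he.extend_apply _ _ s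

variable [Fintype κ]

lemma biUnion_blocksAlong (he : Function.Injective e) :
    ⋃ j ∈ Finset.univ.image e, blocksAlong e C j = ⋃ s, C s := by
  simp [blocksAlong_apply he]

lemma IsTransversal.isBlockade_blocksAlong (h : IsTransversal I A c C) (hA : IsBlockade I A)
    (hC : ∀ s, (C s).Nonempty) (he : Function.Injective e) :
    IsBlockade (Finset.univ.image e) (blocksAlong e C) := by
  simp only [IsBlockade, Finset.forall_mem_image, Finset.mem_univ, true_imp_iff,
    blocksAlong_apply he]
  exact ⟨hC, fun s t hst ↦
    (hA.2 _ (h.mem s) _ (h.mem t) (h.injective.ne (ne_of_apply_ne e hst))).mono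
      (h.subset s) (h.subset t)⟩

lemma IsTransversal.sizeGE_blocksAlong [Finite V] (h : IsTransversal I A c C)
    (hA : IsBlockade I A) (hC : ∀ s, (C s).Nonempty) (hμ : ∀ s, μ ≤ relSize (A (c s)) (C s))
    (he : Function.Injective e) : SizeGE I A (Finset.univ.image e) (blocksAlong e C) μ := by
  simp only [SizeGE, Finset.forall_mem_image, Finset.mem_univ, true_imp_iff, blocksAlong_apply he]
  intro s i hi hCi
  obtain rfl : i = c s := by
    by_contra hne
    obtain ⟨x, hx⟩ := hC s
    exact (hA.2 i hi _ (h.mem s) hne).notMem_of_mem_left (hCi hx) (h.subset s hx)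
  exact mul_ncard_le_of_le_relSize (hμ s)

lemma IsGraded.gradesFwd_blocksAlong [LinearOrder κ] (h : IsGraded G Y C) (hY : ∀ s, Y s ⊆ L a)
    (he : StrictAnti e) (hL : Reaches G L a (⋃ s, C s)) :
    GradesFwd G L a (Finset.univ.image e) (blocksAlong e C) := by
  refine ⟨by rwa [biUnion_blocksAlong he.injective], ?_⟩
  simp only [Finset.forall_mem_image, Finset.mem_univ, true_imp_iff,
    blocksAlong_apply he.injective, he.le_iff_ge, he.lt_iff_gt]
  exact fun s ↦ ⟨Y s, hY s, fun t hts ↦ (h.subset_nbhd t).trans (nbhd_mono (h.mono hts)),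
    fun t hst y hy x hx hyx ↦ (h.disjoint_nbhd s t hst).notMem_of_mem_left hx ⟨y, hy, hyx⟩⟩

lemma IsFork.rainbow_blocksAlong (h : IsFork G I A v L qL a M qM b) (hC : IsTransversal I A c C)
    (hL : IsAttached G L qL a c C) (hM : IsAttached G M qM b c C) (he : Function.Injective e) :
    RainbowBiLevelling I A L a M b (Finset.univ.image e) (blocksAlong e C) := by
  refine ⟨Function.extend e c 0, qL, qM, ?_⟩
  simp only [Finset.forall_mem_image, Finset.mem_univ, true_imp_iff, blocksAlong_apply he,
    he.extend_apply]
  exact ⟨fun s ↦ ⟨hC.mem s, hC.subset s⟩, fun i hi ↦ ⟨h.left.mem i hi, h.left.subset i hi⟩,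
    fun i _ hi ↦ ⟨h.right.mem i hi, h.right.subset i hi⟩,
    fun s t hst ↦ congrArg e (hC.injective hst), fun i hi j hj ↦ h.left.injOn hi hj,
    fun i _ hi j _ hj ↦ h.right.injOn hi hj, hL.ne, fun s i _ hi ↦ hM.ne s i hi, h.ne⟩

lemma IsFork.exists_biLevelling [Finite V] {k : ℕ} {c : Fin k → ℤ} {Y C : Fin k → Set V}
    (h : IsFork G I A v L qL a M qM b) (hA : IsBlockade I A) (hYC : IsGraded G Y C)
    (hY : ∀ s, Y s ⊆ L a) (hC : IsTransversal I A c C) (hL : IsAttached G L qL a c C)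
    (hM : IsAttached G M qM b c C) (hμ : 0 < μ) (hCμ : ∀ s, μ ≤ relSize (A (c s)) (C s)) :
    ∃ J D, IsBiLevelling G L a M b J D ∧ RainbowBiLevelling I A L a M b J D ∧ J.card = k ∧
      SizeGE I A J D μ := by
  -- A grading has increasing sets `Y s`, so its order is reversed to grade forwards.
  let e : Fin k → ℤ := fun s ↦ -(s : ℕ)
  have he : StrictAnti e := fun s t hst ↦ neg_lt_neg (Int.ofNat_lt.2 hst)
  have hne (s) : (C s).Nonempty := nonempty_of_relSize_pos (hμ.trans_le (hCμ s))
  have hLl := h.left.isLevelling h.one_le_left (by rw [h.left_zero, Set.ncard_singleton]) hA.2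
  have hMl := h.right.isLevelling h.one_le_right (by rw [h.right_zero, Set.ncard_singleton]) hA.2
  refine ⟨Finset.univ.image e, blocksAlong e C,
    ⟨hC.isBlockade_blocksAlong hA hne he.injective, hLl, hMl, h.parallel hA, ?_, ?_⟩,
    h.rainbow_blocksAlong hC hL hM he.injective, ?_,
    hC.sizeGE_blocksAlong hA hne hCμ he.injective⟩
  · rw [biUnion_blocksAlong he.injective]
    exact hM.reaches hA hC h.right hMl
  · exact hYC.gradesFwd_blocksAlong hY he (hL.reaches hA hC h.left hLl)
  · rw [Finset.card_image_of_injective _ he.injective, Finset.card_univ, Fintype.card_fin]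

end Forks

section Scaffolds

variable {G : SimpleGraph V} {I : Finset ℤ} {A : ℤ → Set V} {κ κ' : Type*} [Preorder κ]
  [Preorder κ'] {Q N : ℕ → Set V} {qQ qN : ℕ → ℤ} {p : ℕ → V} {M m l : ℕ} {c : κ → ℤ}
  {Y C D : κ → Set V} {μ : ℝ}

/-- The configuration from which bi-levellings are cut: the levels `Q 0, …, Q M`, and a broom that
starts at the vertex in `Q 0` and leaves the neighbourhood of these levels after its path, both
leading to the family `C`, which is graded by subsets `Y s` of the top level `Q M`. -/
structure IsScaffold (G : SimpleGraph V) (I : Finset ℤ) (A : ℤ → Set V) (Q : ℕ → Set V)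
    (qQ : ℕ → ℤ) (M : ℕ) (p : ℕ → V) (m l : ℕ) (N : ℕ → Set V) (qN : ℕ → ℤ) (Y : κ → Set V)
    (c : κ → ℤ) (C : κ → Set V) : Prop where
  isLevelSeq : IsLevelSeq G I A Q qQ M
  isBroom : IsBroom G I A (nbhdBelow G Q (M + 1)) p m l N qN
  one_le_M : 1 ≤ M
  one_le_l : 1 ≤ l
  zero_subset : Q 0 ⊆ {p 0}
  level_ne : ∀ i, 1 ≤ i → i ≤ M → ∀ t ≤ m + l, qQ i ≠ qN t
  isGraded : IsGraded G Y C
  subset_top : ∀ s, Y s ⊆ Q M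
  isTransversal : IsTransversal I A c C
  isAttached : IsAttached G Q qQ M c C
  block_ne : ∀ s, ∀ t ≤ m + l, c s ≠ qN t
  disjoint_path : ∀ s, Disjoint (C s) (nbhdBelow G N (m + 1))
  subset_nbhd : ∀ s, C s ⊆ nbhd G (N (m + l))

namespace IsScaffold

lemma comp (h : IsScaffold G I A Q qQ M p m l N qN Y c C) (f : κ' ↪o κ) :
    IsScaffold G I A Q qQ M p m l N qN (Y ∘ f) (c ∘ f) (C ∘ f) where
  isLevelSeq := h.isLevelSeq
  isBroom := h.isBroom
  one_le_M := h.one_le_M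
  one_le_l := h.one_le_l
  zero_subset := h.zero_subset
  level_ne := h.level_ne
  isGraded := ⟨h.isGraded.mono.comp f.monotone, fun s ↦ h.isGraded.subset_nbhd (f s),
    fun _ _ hst ↦ h.isGraded.disjoint_nbhd _ _ (f.strictMono hst)⟩
  subset_top s := h.subset_top (f s)
  isTransversal := ⟨h.isTransversal.injective.comp f.injective, fun s ↦ h.isTransversal.mem (f s),
    fun s ↦ h.isTransversal.subset (f s)⟩
  isAttached := ⟨fun s ↦ h.isAttached.ne (f s), fun s ↦ h.isAttached.subset_nbhd (f s),
    fun s ↦ h.isAttached.disjoint_nbhdBelow (f s)⟩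
  block_ne s := h.block_ne (f s)
  disjoint_path s := h.disjoint_path (f s)
  subset_nbhd s := h.subset_nbhd (f s)

lemma mem_path (h : IsScaffold G I A Q qQ M p m l N qN Y c C) {i : ℕ} (hi : i ≤ m) : p i ∈ N i := by
  rw [h.isBroom.eq_singleton i hi]
  rfl

lemma isFork (h : IsScaffold G I A Q qQ M p m l N qN Y c C) {i j t : ℕ} (hi : i ≤ m) (hj : 1 ≤ j)
    (hjM : j ≤ M) (ht : m < t) (htl : t ≤ m + l) :
    IsFork G I A (p i) (climbLevels G Q p m i j) (consSeq (qN i) fun s ↦ qQ (j + s)) (M - j + 1)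
      (fun s ↦ N (i + s)) (fun s ↦ qN (i + s)) (t - i) where
  left := isLevelSeq_climbLevels h.isLevelSeq (h.isBroom.mem i (by omega))
    (h.isBroom.subset i (by omega) (h.mem_path hi))
    (fun s hs hsM ↦ (h.level_ne s hs hsM i (by omega)).symm) hj hjM
  right := h.isBroom.shift (by omega)
  one_le_left := by omega
  one_le_right := by omega
  left_zero := rfl
  right_zero := h.isBroom.eq_singleton i hi
  ne
    | 0, _, s, hs, hst => fun hq ↦ by
      have := h.isBroom.injOn (Set.mem_Iic.2 (by omega)) (Set.mem_Iic.2 (by omega)) hq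
      omega
    | r + 1, hr, s, _, hst => h.level_ne (j + r) (by omega) (by omega) _ (by omega)
  anticomplete
    | r + 1, _, hr, s, hs, hst => fun x hx u hu hxu ↦ by
      rcases le_or_gt (i + s) m with his | his
      · rw [h.isBroom.eq_singleton _ his] at hx
        obtain rfl := hx
        exact not_adj_of_mem_climbClass (by omega) hu (by omega) his hxu
      · exact (h.isBroom.disjoint _ his (by omega)).notMem_of_mem_left hx
          (mem_nbhdBelow.2 ⟨j + r, by omega, u, climbClass_subset hu, hxu.symm⟩)

lemma isAttached_climbLevels (h : IsScaffold G I A Q qQ M p m l N qN Y c C) {i j : ℕ} (hi : i ≤ m)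
    (hjM : j ≤ M) (hDC : ∀ s, D s ⊆ C s) (hD : ∀ s, D s ⊆ nbhd G (climbClass G Q p m i j M)) :
    IsAttached G (climbLevels G Q p m i j) (consSeq (qN i) fun s ↦ qQ (j + s)) (M - j + 1) c D where
  ne
    | s, 0, _ => h.block_ne s i (by omega)
    | s, r + 1, hr => h.isAttached.ne s (j + r) (by omega)
  subset_nbhd := by
    rwa [climbLevels, consSeq, Nat.add_sub_cancel' hjM]
  disjoint_nbhdBelow s := Set.disjoint_left.2 fun x hx hx' ↦ by
    obtain ⟨r, hr, u, hu, hux⟩ := mem_nbhdBelow.1 hx'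
    cases r with
    | zero =>
      obtain rfl := hu
      exact (h.disjoint_path s).notMem_of_mem_left (hDC s hx)
        (mem_nbhdBelow.2 ⟨i, by omega, _, h.mem_path hi, hux⟩)
    | succ r =>
      exact (h.isAttached.disjoint_nbhdBelow s).notMem_of_mem_left (hDC s hx)
        (mem_nbhdBelow.2 ⟨j + r, by omega, u, climbClass_subset hu, hux⟩)

lemma isAttached_shift (h : IsScaffold G I A Q qQ M p m l N qN Y c C) {i t : ℕ} (hit : i ≤ t)
    (htl : t ≤ m + l) (hD : ∀ s, D s ⊆ nbhd G (N t) \ nbhdBelow G N t) :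
    IsAttached G (fun s ↦ N (i + s)) (fun s ↦ qN (i + s)) (t - i) c D where
  ne s r hr := h.block_ne s (i + r) (by omega)
  subset_nbhd s x hx := by
    rw [Nat.add_sub_cancel' hit]
    exact (hD s hx).1
  disjoint_nbhdBelow s := Set.disjoint_left.2 fun x hx hx' ↦ by
    obtain ⟨r, hr, u, hu, hux⟩ := mem_nbhdBelow.1 hx'
    exact (hD s hx).2 (mem_nbhdBelow.2 ⟨i + r, by omega, u, hu, hux⟩)

end IsScaffold

/-- The vertices of `C` that have a neighbour in the part of `Y` in the climbing class `(i, j)`, and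
for which `t` is the first index with a neighbour in `N t`; the triple is `e = (i, j, t)`. -/
def cell (G : SimpleGraph V) (Q : ℕ → Set V) (M : ℕ) (p : ℕ → V) (m : ℕ) (N : ℕ → Set V)
    (Y C : Set V) (e : ℕ × ℕ × ℕ) : Set V :=
  C ∩ (nbhd G (Y ∩ climbClass G Q p m e.1 e.2.1 M) ∩
    (nbhd G (N e.2.2) \ nbhdBelow G N e.2.2))

/-- The triples that index the cells of a scaffold. -/
def cellIndices (M m l : ℕ) : Finset (ℕ × ℕ × ℕ) :=
  Finset.range (m + 1) ×ˢ Finset.Icc 1 M ×ˢ Finset.Ioc m (m + l)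

lemma card_cellIndices (M m l : ℕ) : (cellIndices M m l).card = (m + 1) * (M * l) := by
  simp [cellIndices]

namespace IsScaffold

lemma subset_biUnion_cell (h : IsScaffold G I A Q qQ M p m l N qN Y c C) (s : κ) :
    C s ⊆ ⋃ e ∈ cellIndices M m l, cell G Q M p m N (Y s) (C s) e := by
  classical
  intro x hx
  obtain ⟨y, hy, hyx⟩ := h.isGraded.subset_nbhd s hx
  obtain ⟨i, hi, j, hj, hjM, hyij⟩ := exists_mem_climbClass (m := m)
    (climbs_of_covers h.isLevelSeq.covers h.zero_subset h.one_le_M le_rfl (h.subset_top s hy))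
  have hex : ∃ t, x ∈ nbhd G (N t) := ⟨m + l, h.subset_nbhd s hx⟩
  have hfind : Nat.find hex ≤ m + l := Nat.find_min' hex (h.subset_nbhd s hx)
  have hm : m < Nat.find hex := by
    by_contra! hle
    exact (h.disjoint_path s).notMem_of_mem_left hx
      (mem_nbhdBelow.2 ⟨_, Nat.lt_succ_of_le hle, Nat.find_spec hex⟩)
  refine Set.mem_biUnion (x := (i, j, Nat.find hex)) ?_
    ⟨hx, ⟨y, ⟨hy, hyij⟩, hyx⟩, Nat.find_spec hex, fun hbelow ↦ ?_⟩
  · simp only [cellIndices, Finset.mem_coe, Finset.mem_product, Finset.mem_range, Finset.mem_Icc,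
      Finset.mem_Ioc]
    omega
  · obtain ⟨t, ht, hxt⟩ := mem_nbhdBelow.1 hbelow
    exact Nat.find_min hex ht hxt

lemma cellIndices_nonempty (h : IsScaffold G I A Q qQ M p m l N qN Y c C) :
    (cellIndices M m l).Nonempty := by
  rw [← Finset.card_pos, card_cellIndices]
  have := h.one_le_M
  have := h.one_le_l
  positivity

lemma exists_le_relSize_cell [Finite V] (h : IsScaffold G I A Q qQ M p m l N qN Y c C) (s : κ)
    (hC : (m + 1) * (M * l) * μ ≤ relSize (A (c s)) (C s)) :
    ∃ e ∈ cellIndices M m l, μ ≤ relSize (A (c s)) (cell G Q M p m N (Y s) (C s) e) := by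
  refine Finset.exists_le_of_sum_le h.cellIndices_nonempty ?_
  calc ∑ _e ∈ cellIndices M m l, μ = (m + 1) * (M * l) * μ := by
        rw [Finset.sum_const, card_cellIndices, nsmul_eq_mul]
        push_cast
        rfl
    _ ≤ relSize (A (c s)) (C s) := hC
    _ ≤ _ := (relSize_mono _ (h.subset_biUnion_cell s)).trans (relSize_biUnion_le ..)

lemma exists_biLevelling_of_le_relSize_cell [Finite V] {k : ℕ} {c : Fin k → ℤ}
    {Y C : Fin k → Set V} (h : IsScaffold G I A Q qQ M p m l N qN Y c C) (hA : IsBlockade I A)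
    {e : ℕ × ℕ × ℕ} (he : e ∈ cellIndices M m l) (hμ : 0 < μ)
    (hcell : ∀ s, μ ≤ relSize (A (c s)) (cell G Q M p m N (Y s) (C s) e)) :
    ∃ L a R b J D, IsBiLevelling G L a R b J D ∧ RainbowBiLevelling I A L a R b J D ∧
      J.card = k ∧ a + b ≤ M + m + l ∧ SizeGE I A J D μ := by
  obtain ⟨i, j, t⟩ := e
  simp only [cellIndices, Finset.mem_product, Finset.mem_range, Finset.mem_Icc,
    Finset.mem_Ioc] at he
  obtain ⟨hi, ⟨hj, hjM⟩, htm, ht⟩ := he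
  have hi : i ≤ m := Nat.le_of_lt_succ hi
  have hDC (s) : cell G Q M p m N (Y s) (C s) (i, j, t) ⊆ C s := Set.inter_subset_left
  obtain ⟨J, D, hbi, hrain, hJ, hsize⟩ :=
    (h.isFork hi hj hjM htm ht).exists_biLevelling hA
      (Y := fun s ↦ Y s ∩ climbClass G Q p m i j M)
      (C := fun s ↦ cell G Q M p m N (Y s) (C s) (i, j, t))
      ⟨fun s s' hs ↦ Set.inter_subset_inter_left _ (h.isGraded.mono hs), fun s x hx ↦ hx.2.1,
        fun s s' hs ↦ (h.isGraded.disjoint_nbhd s s' hs).mono (hDC s')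
          (nbhd_mono Set.inter_subset_left)⟩
      (fun s ↦ by
        rw [climbLevels, consSeq, Nat.add_sub_cancel' hjM]
        exact Set.inter_subset_right)
      ⟨h.isTransversal.injective, h.isTransversal.mem,
        fun s ↦ (hDC s).trans (h.isTransversal.subset s)⟩
      (h.isAttached_climbLevels hi hjM hDC fun s x hx ↦ nbhd_mono Set.inter_subset_right hx.2.1)
      (h.isAttached_shift (by omega) ht fun s x hx ↦ hx.2.2) hμ hcell
  exact ⟨_, _, _, _, J, D, hbi, hrain, hJ, by omega, hsize⟩

lemma exists_biLevelling [Finite V] {k n : ℕ} {c : Fin n → ℤ} {Y C : Fin n → Set V}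
    (h : IsScaffold G I A Q qQ M p m l N qN Y c C) (hA : IsBlockade I A)
    (hn : k * ((m + 1) * (M * l)) ≤ n) (hμ : 0 < μ)
    (hC : ∀ s, (m + 1) * (M * l) * μ ≤ relSize (A (c s)) (C s)) :
    ∃ L a R b J D, IsBiLevelling G L a R b J D ∧ RainbowBiLevelling I A L a R b J D ∧
      J.card = k ∧ a + b ≤ M + m + l ∧ SizeGE I A J D μ := by
  choose g hg hgμ using fun s ↦ h.exists_le_relSize_cell s (hC s)
  obtain ⟨e, he, hcard⟩ := Finset.exists_le_card_fiber_of_mul_le_card_of_maps_to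
    (s := Finset.univ) (f := g) (n := k) (fun s _ ↦ hg s) h.cellIndices_nonempty (by
      rw [card_cellIndices, Finset.card_univ, Fintype.card_fin]
      linarith)
  let f := Finset.orderEmbOfCardLe _ hcard
  have hf (s) : g (f s) = e :=
    (Finset.mem_filter.1 (Finset.orderEmbOfCardLe_mem _ hcard s)).2
  exact (h.comp f).exists_biLevelling_of_le_relSize_cell hA he hμ fun s ↦ hf s ▸ hgμ (f s)

end IsScaffold

end Scaffolds

section MainConstruction

variable {G : SimpleGraph V} {I : Finset ℤ} {A : ℤ → Set V} {γ δ lam τ x μ : ℝ}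
  {Q N : ℕ → Set V} {qQ qN : ℕ → ℤ} {p : ℕ → V} {M m l n k ρ : ℕ}

lemma IsLevelSeq.isScaffold {Y C : Fin n → Set V} {c : Fin n → ℤ}
    (hQ : IsLevelSeq G I A Q qQ M) (hM : 1 ≤ M)
    (hN : IsBroom G I A (nbhdBelow G Q M ∪ nbhd G (⋃ s, Y s)) p m l N qN) (hl : 1 ≤ l)
    (hqN : ∀ t ≤ m + l, qN t = qQ 0 ∨ qN t ∈ freeBlocks I qQ M ∧ qN t ∉ Set.range c)
    (hQ₀ : Q 0 ⊆ {p 0}) (hYC : IsGraded G Y C) (hYQ : ∀ s, Y s ⊆ Q M) (hc : Function.Injective c)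
    (hcQ : ∀ s, c s ∈ freeBlocks I qQ M) (hC : ∀ s, C s ⊆ A (c s) \ nbhdBelow G Q M) :
    IsScaffold G I A (Function.update Q M (⋃ s, Y s)) qQ M p m l N qN Y c
      fun s ↦ nbhd G (N (m + l)) ∩ (C s \ nbhdBelow G N (m + 1)) := by
  have hDC (s) : nbhd G (N (m + l)) ∩ (C s \ nbhdBelow G N (m + 1)) ⊆ C s := fun _ hx ↦ hx.2.1
  exact {
    isLevelSeq := hQ.update_top (Set.iUnion_subset hYQ)
    isBroom := by
      rw [nbhdBelow_succ, nbhdBelow_update_of_le Q _ le_rfl, Function.update_self]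
      exact hN
    one_le_M := hM
    one_le_l := hl
    zero_subset := by rwa [Function.update_of_ne (by omega)]
    level_ne := fun i hi hiM t ht hq ↦ by
      rcases hqN t ht with hqt | ⟨hqt, -⟩
      · have := hQ.injOn hiM (Set.mem_Iic.2 M.zero_le) (hq.trans hqt)
        omega
      · exact (mem_freeBlocks.1 hqt).2 i hiM hq
    isGraded := hYC.subset_right hDC
    subset_top := fun s ↦ by
      rw [Function.update_self]
      exact Set.subset_iUnion Y s
    isTransversal := ⟨hc, fun s ↦ (mem_freeBlocks.1 (hcQ s)).1,
      fun s ↦ (hDC s).trans ((hC s).trans Set.sdiff_subset)⟩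
    isAttached := ⟨fun s i hi ↦ ((mem_freeBlocks.1 (hcQ s)).2 i hi).symm, fun s ↦ by
        rw [Function.update_self]
        exact (hDC s).trans ((hYC.subset_nbhd s).trans (nbhd_mono (Set.subset_iUnion Y s))),
      fun s ↦ by
        rw [nbhdBelow_update_of_le Q _ le_rfl]
        exact Set.disjoint_sdiff_left.mono_left ((hDC s).trans (hC s))⟩
    block_ne := fun s t ht hq ↦ by
      rcases hqN t ht with hqt | ⟨-, hqt⟩
      · exact (mem_freeBlocks.1 (hcQ s)).2 0 M.zero_le (hq.trans hqt).symm
      · exact hqt ⟨s, hq⟩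
    disjoint_path := fun s ↦ Set.disjoint_sdiff_left.mono_left Set.inter_subset_right
    subset_nbhd := fun s ↦ Set.inter_subset_left }

lemma IsGrowable.exists_isScaffold [Finite V] (h : IsGrowable G I A γ δ lam τ ρ)
    (hI : n + 3 * ρ ≤ I.card) (hx : 0 < x) (hnx : n * (x + lam) ≤ 1 / 4) :
    ∃ Q qQ M p m l N qN, ∃ (Y : Fin n → Set V) (c : Fin n → ℤ) (C : Fin n → Set V),
      IsScaffold G I A Q qQ M p m l N qN Y c C ∧ M ≤ ρ - 1 ∧ m ≤ ρ - 1 ∧ l ≤ ρ - 1 ∧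
      ∀ s, x - ρ * lam - γ ≤ relSize (A (c s)) (C s) := by
  have hρ := h.two_le_ρ
  obtain ⟨B, hBA, hBs, hexp⟩ := h.exists_relExpanding (fun _ _ ↦ subset_rfl)
    (fun i hi ↦ (relSize_self (h.isBlockade.1 i hi)).ge) (by norm_num)
  obtain ⟨i₀, hi₀⟩ : I.Nonempty := Finset.card_pos.1 (by omega)
  obtain ⟨z, hz⟩ := nonempty_of_relSize_pos (lt_of_lt_of_le (by norm_num) (hBs i₀ hi₀))
  obtain ⟨Q, qQ, M, hM, hMρ, hQ, hQ₀, hQs⟩ := h.exists_isRooted hexp (fun i _ ↦ hBA i)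
    (η := 1 / 16) (by norm_num) (by norm_num) (by norm_num) (by omega) hi₀ hz
  have hfree := card_le_card_freeBlocks_add I qQ M
  obtain ⟨Y, c, C, hYC, hc, hYQ, hC, hrest⟩ := h.exists_isGraded_top (fun i _ ↦ hBA i)
    (fun i hi ↦ by linarith [hBs i hi]) (by norm_num at hQ ⊢; exact hQ) hQs (by omega) hx hnx
  let F := freeBlocks I qQ M \ Finset.univ.image c
  have hF (j) : j ∈ F ↔ j ∈ freeBlocks I qQ M ∧ j ∉ Set.range c := by simp [F]
  have hFI : F ⊆ I := fun j hj ↦ (mem_freeBlocks.1 ((hF j).1 hj).1).1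
  have hFcard : 2 * ρ ≤ F.card := by
    have hsdiff : (freeBlocks I qQ M).card - (Finset.univ.image c).card ≤ F.card :=
      Finset.le_card_sdiff _ _
    rw [Finset.card_image_of_injective _ hc, Finset.card_univ, Fintype.card_fin] at hsdiff
    omega
  obtain ⟨p, m, l, N, qN, hN, hqN, hmρ, hl, hlρ, rfl, hNs⟩ :=
    h.exists_isBroom_insert hexp (by norm_num) (fun i _ ↦ hBA i) hFI hFcard hi₀ hz
      fun j hj ↦ hrest j ((hF j).1 hj).1 ((hF j).1 hj).2
  have hS := (hQ.toIsLevelSeq.mono subset_rfl fun i _ ↦ hBA i).isScaffold hM hN hl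
    (fun t ht ↦ (hqN t ht).imp (·.trans hQ.q_zero.symm) (hF _).1) hQ₀.le hYC hYQ hc
    (fun s ↦ (hC s).1) fun s ↦ (hC s).2.1.trans (Set.sdiff_subset_sdiff_left (hBA _))
  refine ⟨_, _, _, _, _, _, _, _, Y, c, _, hS, hMρ, hmρ, hlρ, fun s ↦ ?_⟩
  have hCA : C s ⊆ A (c s) := (hC s).2.1.trans (Set.sdiff_subset.trans (hBA _))
  linarith [(hC s).2.2, hN.sub_le_relSize h hmρ hNs (hS.isTransversal.mem s) (hS.block_ne s) hCA]

lemma IsGrowable.exists_biLevelling [Finite V] (h : IsGrowable G I A γ δ lam τ ρ)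
    (hI : k * ρ ^ 3 + 3 * ρ ≤ I.card) (hμ : 0 < μ) (hx : 0 < x)
    (hkx : (k * ρ ^ 3 : ℕ) * (x + lam) ≤ 1 / 4) (hμx : ρ ^ 3 * μ + ρ * lam + γ ≤ x) :
    ∃ L a R b J D, IsBiLevelling G L a R b J D ∧ RainbowBiLevelling I A L a R b J D ∧
      J.card = k ∧ a + b ≤ 3 * ρ - 3 ∧ SizeGE I A J D μ := by
  obtain ⟨Q, qQ, M, p, m, l, N, qN, Y, c, C, hS, hM, hm, hl, hC⟩ :=
    h.exists_isScaffold hI hx hkx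
  have hρ := h.two_le_ρ
  have hcells : (m + 1) * (M * l) ≤ ρ ^ 3 :=
    calc (m + 1) * (M * l) ≤ ρ * (ρ * ρ) := by gcongr <;> omega
      _ = ρ ^ 3 := by ring
  obtain ⟨L, a, R, b, J, D, hbi, hrain, hJ, hab, hsize⟩ :=
    hS.exists_biLevelling h.isBlockade (Nat.mul_le_mul_left k hcells) hμ fun s ↦
      calc (m + 1) * (M * l) * μ ≤ ρ ^ 3 * μ := by gcongr; exact_mod_cast hcells
        _ ≤ x - ρ * lam - γ := by linarith
        _ ≤ relSize (A (c s)) (C s) := hC s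
  exact ⟨L, a, R, b, J, D, hbi, hrain, hJ, by omega, hsize⟩

end MainConstruction

section Parameters

variable {γ δ lam : ℝ} {k ρ K : ℕ}

lemma mul_pow_three_add_le (hk : 1 ≤ k) (hρ : 2 ≤ ρ) : k * ρ ^ 3 + 3 * ρ ≤ k * ρ ^ 4 := by
  have hρ3 : ρ * 4 ≤ k * ρ ^ 3 :=
    calc ρ * 4 ≤ ρ * ρ ^ 2 := by gcongr; nlinarith
      _ ≤ k * ρ ^ 3 := by rw [← pow_succ']; exact Nat.le_mul_of_pos_left _ hk
  calc k * ρ ^ 3 + 3 * ρ ≤ k * ρ ^ 3 * 2 := by omega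
    _ ≤ k * ρ ^ 3 * ρ := by gcongr
    _ = k * ρ ^ 4 := by ring

lemma eight_mul_le_mul_pow_four (hk : 1 ≤ k) (hρ : 2 ≤ ρ) : 8 * ρ ≤ k * ρ ^ 4 :=
  calc 8 * ρ = 2 ^ 3 * ρ := by norm_num
    _ ≤ ρ ^ 3 * ρ := by gcongr
    _ ≤ k * ρ ^ 4 := by rw [← pow_succ]; exact Nat.le_mul_of_pos_left _ hk

lemma mul_le_of_le_div_sq (hK : 0 < K) (hρK : 8 * ρ ≤ K)
    (hδ : δ ≤ 3 * (ρ : ℝ) / (128 * (K : ℝ) ^ 2)) : K * δ ≤ 3 / 1024 := by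
  have hρK : 8 * (ρ : ℝ) ≤ K := mod_cast hρK
  calc K * δ ≤ K * (3 * (ρ : ℝ) / (128 * (K : ℝ) ^ 2)) := by gcongr
    _ = 8 * ρ * (3 / (1024 * K)) := by field_simp; ring
    _ ≤ K * (3 / (1024 * K)) := by gcongr
    _ = 3 / 1024 := by field_simp

lemma mul_le_of_le_one_div_sq (hρ : 2 ≤ ρ) (hK : 0 < K)
    (hlam : lam ≤ 1 / (512 * (ρ : ℝ) ^ 2 * (K : ℝ))) : ρ * lam ≤ 1 / (1024 * K) := by
  have hρ' : (2 : ℝ) ≤ ρ := mod_cast hρ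
  calc ρ * lam ≤ ρ * (1 / (512 * (ρ : ℝ) ^ 2 * (K : ℝ))) := by gcongr
    _ = 1 / (512 * ρ * K) := by field_simp
    _ ≤ 1 / (512 * 2 * K) := by gcongr
    _ = 1 / (1024 * K) := by norm_num

lemma mul_one_div_add_le_quarter {n : ℕ} (hn : n ≤ K) (hK : 0 < K)
    (hlam : lam ≤ 1 / (1024 * K)) : n * (1 / (32 * K) + lam) ≤ 1 / 4 :=
  calc n * (1 / (32 * K) + lam) ≤ n * (1 / (32 * K) + 1 / (1024 * K)) := by gcongr
    _ ≤ K * (1 / (32 * K) + 1 / (1024 * K)) := by gcongr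
    _ = 33 / 1024 := by field_simp; norm_num
    _ ≤ 1 / 4 := by norm_num

lemma pow_three_mul_add_le (hρ : 0 < ρ) (hK : 0 < K) (hlam : ρ * lam ≤ 1 / (1024 * K))
    (hγ : γ ≤ 3 / (256 * K)) :
    (ρ : ℝ) ^ 3 * (1 / (64 * ρ ^ 3 * K)) + ρ * lam + γ ≤ 1 / (32 * K) :=
  calc (ρ : ℝ) ^ 3 * (1 / (64 * ρ ^ 3 * K)) + ρ * lam + γ
      ≤ (ρ : ℝ) ^ 3 * (1 / (64 * ρ ^ 3 * K)) + 1 / (1024 * K) + 3 / (256 * K) := by gcongr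
    _ = 29 / (1024 * (K : ℝ)) := by field_simp; norm_num
    _ ≤ 32 / (1024 * (K : ℝ)) := by gcongr; norm_num
    _ = 1 / (32 * (K : ℝ)) := by field_simp; norm_num

lemma isGrowable_of_bounds [Finite V] {G : SimpleGraph V} {I : Finset ℤ} {A : ℤ → Set V}
    (hA : IsBlockade I A) (hlink : LinkageLE G I A lam) (hdiv : ¬ Divergent G I A γ δ)
    (hγ₀ : 0 ≤ γ) (hδ₀ : 0 < δ) (hlam₀ : 0 ≤ lam) (hρ : 2 ≤ ρ) (hI : 8 * ρ ≤ I.card)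
    (hlam : ρ * lam ≤ 1 / (1024 * I.card)) (hγ : γ ≤ 3 / (256 * I.card))
    (hδ : I.card * δ ≤ 3 / 1024) (hδV : (256 * I.card * δ / 3) ^ (ρ - 1) * Nat.card V ≤ 1) :
    IsGrowable G I A γ δ lam (256 * I.card * δ / 3)⁻¹ ρ := by
  have hρ' : (2 : ℝ) ≤ ρ := mod_cast hρ
  have hI16 : (16 : ℝ) ≤ I.card := mod_cast show 16 ≤ I.card by omega
  have hδ16 : 16 * δ ≤ I.card * δ := by gcongr
  have hγ' : γ ≤ 3 / (256 * 16) := hγ.trans (by gcongr)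
  have hlam' : ρ * lam ≤ 1 / (1024 * 16) := hlam.trans (by gcongr)
  have hδτ : δ * (256 * I.card * δ / 3)⁻¹ ≤ 3 / (256 * 16) :=
    calc δ * (256 * I.card * δ / 3)⁻¹ = 3 / (256 * I.card) := by field_simp
      _ ≤ 3 / (256 * 16) := by gcongr
  exact {
    isBlockade := hA
    linkageLE := hlink
    not_divergent := hdiv
    γ_nonneg := hγ₀
    δ_nonneg := hδ₀.le
    lam_nonneg := hlam₀
    two_le_ρ := hρ
    lam_le := by nlinarith
    card_mul_δ_add_γ_le := by linarith
    four_le_τ := by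
      rw [le_inv_comm₀ (by norm_num) (by positivity)]
      linarith
    δ_mul_τ_le := by linarith
    ncard_le_pow := fun i _ ↦
      calc ((A i).ncard : ℝ) ≤ Nat.card V := mod_cast Set.ncard_le_card (A i)
        _ ≤ (256 * I.card * δ / 3)⁻¹ ^ (ρ - 1) := by
          rwa [inv_pow, ← one_div, le_div_iff₀' (by positivity)] }

end Parameters

/-- obtaining an `A`-rainbow bi-levelling of length `k` and height at
most `3ρ - 3` from a long blockade with small linkage that is not divergent. -/
theorem statement_12 {V : Type} [Fintype V] (G : SimpleGraph V)
    (k ρ : ℕ) (hk : 1 ≤ k) (hρ : 2 ≤ ρ) (K : ℕ) (hK : K = k * ρ ^ 4)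
    (γ lam : ℝ) (hγ0 : 0 < γ) (hlam0 : 0 < lam)
    (hlam : lam ≤ 1 / (512 * (ρ : ℝ) ^ 2 * (K : ℝ)))
    (hγ : γ ≤ 3 / (256 * (K : ℝ)))
    (δ : ℝ) (hδ0 : 0 < δ) (hδ : δ ≤ 3 * (ρ : ℝ) / (128 * (K : ℝ) ^ 2))
    (hδG : (256 * (K : ℝ) * δ / 3) ^ (ρ - 1) * (Fintype.card V : ℝ) ≤ 1)
    (I : Finset ℤ) (A : ℤ → Set V) (hA : IsBlockade I A) (hlen : I.card = K)
    (hlink : LinkageLE G I A lam) (hdiv : ¬ Divergent G I A γ δ) :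
    ∃ (L : ℕ → Set V) (a : ℕ) (M : ℕ → Set V) (b : ℕ) (J : Finset ℤ) (C : ℤ → Set V),
      IsBiLevelling G L a M b J C ∧ RainbowBiLevelling I A L a M b J C ∧
      J.card = k ∧ a + b ≤ 3 * ρ - 3 ∧
      SizeGE I A J C (1 / (64 * (ρ : ℝ) ^ 3 * (K : ℝ))) := by
  subst hlen
  have hI : 8 * ρ ≤ I.card := hK ▸ eight_mul_le_mul_pow_four hk hρ
  have hI₀ : 0 < I.card := by omega
  have hρ' : (2 : ℝ) ≤ ρ := mod_cast hρ
  have hρlam := mul_le_of_le_one_div_sq hρ hI₀ hlam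
  have hlam' : lam ≤ 1 / (1024 * I.card) := le_trans (by nlinarith) hρlam
  have hlevels : k * ρ ^ 3 ≤ I.card := by linarith [mul_pow_three_add_le hk hρ]
  have h := isGrowable_of_bounds hA hlink hdiv hγ0.le hδ0 hlam0.le hρ hI hρlam hγ
    (mul_le_of_le_div_sq hI₀ hI hδ) (by rwa [Nat.card_eq_fintype_card])
  exact h.exists_biLevelling (hK ▸ mul_pow_three_add_le hk hρ) (by positivity)
    (x := 1 / (32 * I.card)) (by positivity) (mul_one_div_add_le_quarter hlevels hI₀ hlam')
    (pow_three_mul_add_le (by omega) hI₀ hρlam hγ)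

end PurePairs
end
end
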